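/- arXiv:2512.21143 — 2 statements merged into one kernel-verified Lean document; each statement's English description precedes it below -/
import Mathlib

section
/- Let D be a non-trivial, non-symmetric 2-(v,k,3) design with 3 dividing r, admitting a flag-transitive, point-primitive automorphism group G that is almost simple with socle X = PSL(2,q), where X acts point-primitively on D with point stabilizer X_α maximal in X. Then X_α is not isomorphic to PSL(2,q₀) with q = q₀ᵗ odd and t an odd prime; that is, the subfield case with q odd, q = q₀ᵗ, t an odd prime, and v = q₀^{t−1}(q₀^{2t}−1)/(q₀²−1), does not occur. -/
/-!
Write `X_α ≅ PSL(2,q₀)` and `q = q₀ᵗ`, `q₀ = p ^ f₀`. Comparing orders gives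
`v = q₀^(t-1) * (1 + q₀² + ⋯ + q₀^(2(t-1)))`, so `q₀ ∣ v` and `v ≡ t` modulo `q₀² - 1`
(`degree_eq`, `gcd_dvd`); hence `gcd (v - 1, |X_α|)` divides `t - 1`.

Flag-transitivity makes `r` a divisor of `|G_α| = m |X_α|` with `m = |G : X|`
(`rep_dvd_card_stabilizer`), and `r (k - 1) = 3 (v - 1)`; therefore `r` divides `3 m (t - 1)`.
Since `X` has trivial centralizer, `G` embeds in `Aut(PSL(2,q))`, whose order is at most
`2 f₀ t |PSL(2,q)|` (`card_mulAut_le`), so `m ≤ 2 f₀ t`. On the other hand Fisher's inequality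
`k ≤ r` (`design_facts`) gives `3 v ≤ r²`. The resulting bound
`v ≤ 12 f₀² t² (t - 1)²` contradicts `v ≥ 27 ^ (f₀ (t - 1))` (`numeric`).

The bound on `Aut(PSL(2,q))` comes from orbit-stabilizer applied twice. An automorphism sends the
unipotent element `up 1` to one of the `q² - 1` elements of order `p` (`order_p_subset`). If it
fixes `up 1`, it preserves the centralizer `{up a}`, and sends a torus generator `dg w` to
`dg e * up b` where `e²` is a root of the minimal polynomial of `w²` over the prime field
(`aut_dg`): at most `f q` choices. If it fixes both elements it is trivial (`aut_rigid`).
-/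

open scoped Pointwise
open Matrix

namespace FT

variable {Pt : Type*}

/-- `IsDesign 𝓑 k lam` says that the family `𝓑` of subsets of the point set `Pt` is the
block set of a `2-(v, k, lam)` design: every block has `k` points and any two distinct
points lie on exactly `lam` common blocks. -/
structure IsDesign (𝓑 : Set (Set Pt)) (k lam : ℕ) : Prop where
  block_card : ∀ B ∈ 𝓑, Nat.card B = k
  pair_count : ∀ x y : Pt, x ≠ y → Nat.card {B : Set Pt | B ∈ 𝓑 ∧ x ∈ B ∧ y ∈ B} = lam

/-- The group `G` acts on the design with point set `Pt` and block set `𝓑` as a group of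
automorphisms. -/
def ActsOn (G : Type*) [Group G] [MulAction G Pt] (𝓑 : Set (Set Pt)) : Prop :=
  ∀ (g : G), ∀ B ∈ 𝓑, g • B ∈ 𝓑

/-- The group `G` is transitive on the flags (incident point-block pairs) of the design. -/
def FlagTransitive (G : Type*) [Group G] [MulAction G Pt] (𝓑 : Set (Set Pt)) : Prop :=
  ∀ B ∈ 𝓑, ∀ C ∈ 𝓑, ∀ x ∈ B, ∀ y ∈ C, ∃ g : G, g • B = C ∧ g • x = y

/-- The action of `G` on `Pt` is primitive: it is transitive and every block of
imprimitivity is trivial. -/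
def PointPrimitive (G : Type*) [Group G] (Pt : Type*) [MulAction G Pt] : Prop :=
  MulAction.IsPretransitive G Pt ∧
    ∀ s : Set Pt, MulAction.IsBlock G s → s.Subsingleton ∨ s = Set.univ

/-- The number of blocks of `𝓑` through the point `x` (the replication number, for a
flag-transitive design). -/
noncomputable def repNum (𝓑 : Set (Set Pt)) (x : Pt) : ℕ :=
  Nat.card {B : Set Pt | B ∈ 𝓑 ∧ x ∈ B}

/-- The projective general linear group `PGL(2,K)`, as the quotient of `GL(2,K)` by its
center. -/
abbrev PGL2 (K : Type*) [Field K] :=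
  GL (Fin 2) K ⧸ Subgroup.center (GL (Fin 2) K)

/-- The projective special linear group `PSL(2,K)`. -/
abbrev PSL2 (K : Type*) [Field K] := Matrix.ProjectiveSpecialLinearGroup (Fin 2) K

end FT

namespace FT

variable {Pt : Type*}

/-! ### Elements and generators of `PSL(2,K)` -/

section PSL

variable {K : Type*} [Field K]

/-- The canonical projection `SL(2,K) → PSL(2,K)`. -/
def proj : SpecialLinearGroup (Fin 2) K →* PSL2 K := QuotientGroup.mk' _

lemma proj_surjective : Function.Surjective (proj (K := K)) := QuotientGroup.mk'_surjective _

lemma mem_center_SL2 (g : SpecialLinearGroup (Fin 2) K) :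
    g ∈ Subgroup.center (SpecialLinearGroup (Fin 2) K) ↔ g = 1 ∨ g = -1 := by
  rw [Matrix.SpecialLinearGroup.mem_center_iff]
  constructor
  · rintro ⟨r, hr, hg⟩
    rw [Fintype.card_fin, sq_eq_one_iff] at hr
    rcases hr with rfl | rfl
    · left; ext i j; simp [← hg]
    · right; ext i j; fin_cases i <;> fin_cases j <;> simp [← hg]
  · rintro (rfl | rfl)
    · exact ⟨1, by simp, by simp⟩
    · refine ⟨-1, by simp, ?_⟩
      ext i j; fin_cases i <;> fin_cases j <;> simp

lemma proj_eq_iff (g h : SpecialLinearGroup (Fin 2) K) :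
    proj g = proj h ↔ h = g ∨ h = -g := by
  have : proj g = proj h ↔ g⁻¹ * h ∈ Subgroup.center (SpecialLinearGroup (Fin 2) K) :=
    QuotientGroup.eq
  rw [this, mem_center_SL2, inv_mul_eq_iff_eq_mul, inv_mul_eq_iff_eq_mul, mul_one, mul_neg, mul_one]

/-- The matrix with rows `(a, b)` and `(c, d)` and determinant one, as an element of `SL(2,K)`. -/
def mkSL (a b c d : K) (h : a * d - b * c = 1) : SpecialLinearGroup (Fin 2) K :=
  ⟨!![a, b; c, d], by rw [det_fin_two_of, h]⟩

@[simp]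
lemma coe_mkSL (a b c d : K) (h : a * d - b * c = 1) :
    (mkSL a b c d h : Matrix (Fin 2) (Fin 2) K) = !![a, b; c, d] := rfl

/-- The upper unitriangular element of `PSL(2,K)` with parameter `a`. -/
def up (a : K) : PSL2 K := proj (mkSL 1 a 0 1 (by simp))

/-- The lower unitriangular element of `PSL(2,K)` with parameter `a`. -/
def lo (a : K) : PSL2 K := proj (mkSL 1 0 a 1 (by simp))

/-- The diagonal element `diag(w, w⁻¹)` of `PSL(2,K)`. -/
def dg (w : Kˣ) : PSL2 K := proj (mkSL (w : K) 0 0 (w⁻¹ : Kˣ) (by simp))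

/-- The Weyl element of `PSL(2,K)`. -/
def wl : PSL2 K := proj (mkSL 0 1 (-1) 0 (by simp))

lemma up_mul (a b : K) : up a * up b = up (a + b) := by
  simp only [up, ← map_mul]
  congr 1; ext i j; fin_cases i <;> fin_cases j <;> simp [add_comm]

lemma up_zero : up (0 : K) = 1 := by
  simpa using up_mul (0 : K) 0

lemma up_inj (h2 : (2 : K) ≠ 0) {a b : K} (h : up a = up b) : a = b := by
  rw [up, up, proj_eq_iff] at h
  rcases h with h | h
  · have := congrArg (fun g : SpecialLinearGroup (Fin 2) K => g 0 1) h
    simpa using this.symm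
  · have := congrArg (fun g : SpecialLinearGroup (Fin 2) K => g 0 0) h
    simp at this
    exact absurd (by linear_combination this) h2

lemma dg_mul_up (w : Kˣ) (a : K) : dg w * up a = up ((w : K) ^ 2 * a) * dg w := by
  simp only [dg, up, ← map_mul]
  congr 1; ext i j; fin_cases i <;> fin_cases j <;> simp
  field_simp

lemma wl_mul_dg (w : Kˣ) : wl * dg w * wl⁻¹ = (dg w)⁻¹ := by
  simp only [dg, wl, ← map_mul, ← map_inv]
  congr 1; ext i j; fin_cases i <;> fin_cases j <;> simp [Matrix.SpecialLinearGroup.coe_inv, adjugate_fin_two]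

lemma lo_eq (c : K) : lo c = wl * up (-c) * wl⁻¹ := by
  simp only [lo, wl, up, ← map_mul, ← map_inv]
  congr 1; ext i j; fin_cases i <;> fin_cases j <;> simp [Matrix.SpecialLinearGroup.coe_inv, adjugate_fin_two]

lemma wl_up_cube : (wl * up (1 : K)) ^ 3 = 1 := by
  simp only [wl, up, ← map_mul, ← map_pow]
  rw [← map_one proj]
  congr 1; ext i j; fin_cases i <;> fin_cases j <;> simp [pow_succ]

/-- The centralizer of a unipotent element `up 1` is the group of all `up a`. -/
lemma commute_up_one (h2 : (2 : K) ≠ 0) {h : PSL2 K} (hc : h * up 1 = up 1 * h) :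
    ∃ a, h = up a := by
  obtain ⟨g, rfl⟩ := proj_surjective h
  rw [up, ← map_mul, ← map_mul, proj_eq_iff] at hc
  have hdet := g.2
  rw [det_fin_two] at hdet
  have key : g.1 1 0 = 0 ∧ g.1 0 0 = g.1 1 1 := by
    rcases hc with hc | hc
    · have e1 := congrArg (fun g : SpecialLinearGroup (Fin 2) K => g 0 0) hc
      have e2 := congrArg (fun g : SpecialLinearGroup (Fin 2) K => g 0 1) hc
      simp [mul_apply, Fin.sum_univ_two] at e1 e2
      exact ⟨e1, by linear_combination -e2⟩
    · exfalso
      have e1 := congrArg (fun g : SpecialLinearGroup (Fin 2) K => g 1 0) hc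
      have e2 := congrArg (fun g : SpecialLinearGroup (Fin 2) K => g 0 0) hc
      have e3 := congrArg (fun g : SpecialLinearGroup (Fin 2) K => g 1 1) hc
      simp [mul_apply, Fin.sum_univ_two] at e1 e2 e3
      have c0 : g.1 1 0 = 0 := by
        apply (mul_eq_zero.1 (show (2 : K) * g.1 1 0 = 0 by linear_combination e1)).resolve_left h2
      have a0 : g.1 0 0 = 0 := by
        apply (mul_eq_zero.1 (show (2 : K) * g.1 0 0 = 0 by linear_combination e2 - c0)).resolve_left h2
      rw [c0, a0] at hdet
      simp at hdet
  obtain ⟨c0, ad⟩ := key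
  rw [c0, ← ad] at hdet
  have : g.1 0 0 = 1 ∨ g.1 0 0 = -1 := by
    rw [← sq_eq_one_iff]; linear_combination hdet
  rcases this with h1 | h1
  · refine ⟨g.1 0 1, ?_⟩
    congr 1; ext i j
    fin_cases i <;> fin_cases j <;> simp [c0, ← ad, h1]
  · refine ⟨-g.1 0 1, ?_⟩
    rw [up, proj_eq_iff]; right; ext i j
    fin_cases i <;> fin_cases j <;> simp [c0, ← ad, h1]

/-- An element commuting with a diagonal element of order greater than two is diagonal. -/
lemma commute_dg {w : Kˣ} (hw : (w : K) ^ 4 ≠ 1) {h : PSL2 K} (hc : h * dg w = dg w * h) :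
    ∃ e, h = dg e := by
  obtain ⟨g, rfl⟩ := proj_surjective h
  rw [dg, ← map_mul, ← map_mul, proj_eq_iff] at hc
  have hdet := g.2
  rw [det_fin_two] at hdet
  have hw0 : (w : K) ≠ 0 := w.ne_zero
  have key : g.1 0 1 = 0 ∧ g.1 1 0 = 0 := by
    rcases hc with hc | hc
    · have e1 := congrArg (fun g : SpecialLinearGroup (Fin 2) K => g 0 1) hc
      have e2 := congrArg (fun g : SpecialLinearGroup (Fin 2) K => g 1 0) hc
      simp [mul_apply, Fin.sum_univ_two] at e1 e2
      field_simp at e1 e2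
      have hw2 : (w : K) ^ 2 - 1 ≠ 0 := by
        intro h; apply hw; linear_combination ((w : K) ^ 2 + 1) * h
      constructor
      · exact (mul_eq_zero.1 (show ((w : K) ^ 2 - 1) * g.1 0 1 = 0 by
          linear_combination e1)).resolve_left hw2
      · exact (mul_eq_zero.1 (show ((w : K) ^ 2 - 1) * g.1 1 0 = 0 by
          linear_combination -e2)).resolve_left hw2
    · have e1 := congrArg (fun g : SpecialLinearGroup (Fin 2) K => g 0 1) hc
      have e2 := congrArg (fun g : SpecialLinearGroup (Fin 2) K => g 1 0) hc
      simp [mul_apply, Fin.sum_univ_two] at e1 e2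
      field_simp at e1 e2
      have hw2 : (w : K) ^ 2 + 1 ≠ 0 := by
        intro h; apply hw; linear_combination ((w : K) ^ 2 - 1) * h
      constructor
      · exact (mul_eq_zero.1 (show ((w : K) ^ 2 + 1) * g.1 0 1 = 0 by
          linear_combination e1)).resolve_left hw2
      · exact (mul_eq_zero.1 (show ((w : K) ^ 2 + 1) * g.1 1 0 = 0 by
          linear_combination e2)).resolve_left hw2
  obtain ⟨b0, c0⟩ := key
  rw [b0, zero_mul, sub_zero] at hdet
  refine ⟨⟨g.1 0 0, g.1 1 1, hdet, by rw [mul_comm]; exact hdet⟩, ?_⟩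
  congr 1; ext i j
  fin_cases i <;> fin_cases j <;> simp [b0, c0]

/-- The relation `(wl * up 1) ^ 3 = 1` pins the Weyl element down among its translates by
diagonal elements. -/
lemma dg_eq_one_of_cube {e : Kˣ} (h : (dg e * wl * up (1 : K)) ^ 3 = 1) : dg e = 1 := by
  simp only [dg, wl, up, ← map_mul, ← map_pow] at h
  rw [← map_one proj, eq_comm, proj_eq_iff] at h
  have he : (e : K) ≠ 0 := e.ne_zero
  have hsq : (e : K) ^ 2 = 1 := by
    rcases h with h | h <;>
    · have e1 := congrArg (fun g : SpecialLinearGroup (Fin 2) K => g 1 0) h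
      simp [pow_succ] at e1
      field_simp at e1
      linear_combination -e1
  have hor := sq_eq_one_iff.1 hsq
  rw [dg, ← map_one proj, eq_comm, proj_eq_iff]
  rcases hor with h1 | h1
  · left; ext i j; fin_cases i <;> fin_cases j <;> simp [h1]
  · right; ext i j; fin_cases i <;> fin_cases j <;> simp [h1]

/-- `PSL(2,K)` is generated by the Weyl element and the upper unitriangular elements. -/
lemma generated (H : Subgroup (PSL2 K)) (hw : wl ∈ H) (hu : ∀ a : K, up a ∈ H) : H = ⊤ := by
  have hlo : ∀ c : K, lo c ∈ H := fun c => by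
    rw [lo_eq]; exact H.mul_mem (H.mul_mem hw (hu _)) (H.inv_mem hw)
  have main : ∀ g : SpecialLinearGroup (Fin 2) K, g.1 1 0 ≠ 0 → proj g ∈ H := by
    intro g hg
    have hdet := g.2
    rw [det_fin_two] at hdet
    have : proj g = up ((g.1 0 0 - 1) / g.1 1 0) * lo (g.1 1 0) * up ((g.1 1 1 - 1) / g.1 1 0) := by
      simp only [up, lo, ← map_mul]
      congr 1; ext i j
      fin_cases i <;> fin_cases j <;> simp <;> field_simp
      · ring
      · linear_combination -hdet
      · ring
    rw [this]
    exact H.mul_mem (H.mul_mem (hu _) (hlo _)) (hu _)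
  rw [eq_top_iff]
  rintro h -
  obtain ⟨g, rfl⟩ := proj_surjective h
  by_cases hg : g.1 1 0 = 0
  · have hdet := g.2
    rw [det_fin_two, hg] at hdet
    have ha : g.1 0 0 ≠ 0 := by rintro h; simp [h] at hdet
    have := main ((mkSL 0 1 (-1) 0 (by simp)) * g) (by
      simpa [mul_apply, Fin.sum_univ_two] using ha)
    rw [map_mul] at this
    exact (H.mul_mem_cancel_left hw).1 this
  · exact main g hg


/-- If `h` conjugates each `up a` to some `up (c a)`, then `h` is the class of an upper triangular
matrix `diag(e, e⁻¹) * up b`, and `c` is multiplication by `e ^ 2`. -/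
lemma borel (h2 : (2 : K) ≠ 0) {h : PSL2 K} {c : K → K} (hc : ∀ a, h * up a = up (c a) * h) :
    ∃ (e : Kˣ) (b : K), h = dg e * up b ∧ ∀ a, c a = (e : K) ^ 2 * a := by
  obtain ⟨g, rfl⟩ := proj_surjective h
  have hdet := g.2
  rw [det_fin_two] at hdet
  have c0 : g.1 1 0 = 0 := by
    have h1 := hc 1
    rw [up, up, ← map_mul, ← map_mul, proj_eq_iff] at h1
    rcases h1 with h1 | h1
    · have e1 := congrArg (fun g : SpecialLinearGroup (Fin 2) K => g 1 1) h1
      simp [mul_apply, Fin.sum_univ_two] at e1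
      exact e1
    · have e1 := congrArg (fun g : SpecialLinearGroup (Fin 2) K => g 1 0) h1
      simp [mul_apply, Fin.sum_univ_two] at e1
      exact (mul_eq_zero.1 (show (2 : K) * g.1 1 0 = 0 by linear_combination e1)).resolve_left h2
  rw [c0, mul_zero, sub_zero] at hdet
  have ha : g.1 0 0 ≠ 0 := by rintro h; simp [h] at hdet
  refine ⟨⟨g.1 0 0, g.1 1 1, hdet, by rw [mul_comm]; exact hdet⟩, g.1 0 1 / g.1 0 0, ?_, ?_⟩
  · rw [dg, up, ← map_mul]
    congr 1; ext i j
    fin_cases i <;> fin_cases j <;> simp [c0]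
    field_simp
  · intro a
    have h1 := hc a
    rw [up, up, ← map_mul, ← map_mul, proj_eq_iff] at h1
    rcases h1 with h1 | h1
    · have e1 := congrArg (fun g : SpecialLinearGroup (Fin 2) K => g 0 1) h1
      simp [mul_apply, Fin.sum_univ_two] at e1
      simp only [sq]
      linear_combination (-c a) * hdet + g.1 0 0 * e1
    · have e1 := congrArg (fun g : SpecialLinearGroup (Fin 2) K => g 0 0) h1
      simp [mul_apply, Fin.sum_univ_two] at e1
      rw [c0] at e1
      exact absurd (mul_eq_zero.1 (show (2 : K) * g.1 0 0 = 0 by linear_combination e1))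
        (by simp [h2, ha])

/-- The elements of order `p` in `PSL(2,K)`, in characteristic `p`, parametrized by the nonzero
vectors of the plane. -/
lemma order_p_subset (p : ℕ) [hp : Fact p.Prime] [CharP K p] (hodd : Odd p) {h : PSL2 K}
    (h1 : h ≠ 1) (hpow : h ^ p = 1) :
    (∃ a : K, a ≠ 0 ∧ h = lo a) ∨ ∃ a b : K, b ≠ 0 ∧ h = lo a * up b * lo (-a) := by
  have lift : ∃ g : SpecialLinearGroup (Fin 2) K, proj g = h ∧ g ^ p = 1 := by
    obtain ⟨g, rfl⟩ := proj_surjective h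
    rw [← map_pow, ← map_one proj, eq_comm, proj_eq_iff] at hpow
    rcases hpow with hpow | hpow
    · exact ⟨g, rfl, hpow⟩
    · refine ⟨-g, ?_, ?_⟩
      · rw [proj_eq_iff]; right; simp
      · rw [hodd.neg_pow, hpow, neg_neg]
  obtain ⟨g, rfl, hg⟩ := lift
  have hg' : (g : Matrix (Fin 2) (Fin 2) K) ^ p = 1 := by
    rw [← Matrix.SpecialLinearGroup.coe_pow, hg, Matrix.SpecialLinearGroup.coe_one]
  have hnil : IsNilpotent ((g : Matrix (Fin 2) (Fin 2) K) - 1) := by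
    refine ⟨p, ?_⟩
    rw [sub_pow_char_of_commute p (Commute.one_right _), hg', one_pow, sub_self]
  have htr := (Matrix.isNilpotent_trace_of_isNilpotent hnil).eq_zero
  rw [trace_fin_two] at htr
  simp at htr
  have hdet := g.2
  rw [det_fin_two] at hdet
  have hd : g.1 1 1 = 2 - g.1 0 0 := by linear_combination htr
  rw [hd] at hdet
  by_cases hb : g.1 0 1 = 0
  · left
    have ha : g.1 0 0 = 1 := by
      have : (g.1 0 0 - 1) ^ 2 = 0 := by rw [hb] at hdet; linear_combination -hdet
      linear_combination pow_eq_zero_iff (two_ne_zero) |>.1 this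
    have hgl : proj g = lo (g.1 1 0) := by
      rw [lo]
      congr 1; ext i j
      fin_cases i <;> fin_cases j <;> simp [hb, ha, hd]
      norm_num
    refine ⟨g.1 1 0, ?_, hgl⟩
    intro hc
    apply h1
    rw [hgl, hc, lo, ← map_one proj]
    congr 1; ext i j
    fin_cases i <;> fin_cases j <;> simp
  · right
    refine ⟨(1 - g.1 0 0) / g.1 0 1, g.1 0 1, hb, ?_⟩
    simp only [lo, up, ← map_mul]
    congr 1; ext i j
    fin_cases i <;> fin_cases j <;> simp [hd] <;> field_simp
    · ring
    · linear_combination -hdet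
    · ring

end PSL

/-! ### The order of `PSL(2,K)` -/

section Card

variable (K : Type*) [Field K]

/-- Elements of `SL(2,K)` with lower left entry `c ≠ 0` are given by `c` and the diagonal entries;
those with lower left entry `0` are given by their first row. -/
noncomputable def equivSL2 :
    SpecialLinearGroup (Fin 2) K ≃ ({c : K // c ≠ 0} × K × K) ⊕ ({a : K // a ≠ 0} × K) := by
  classical
  exact
  { toFun := fun g =>
      if hc : g.1 1 0 = 0 then Sum.inr (⟨g.1 0 0, by
          have hdet := g.2
          rw [det_fin_two, hc] at hdet
          rintro h; simp [h] at hdet⟩, g.1 0 1)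
      else Sum.inl (⟨g.1 1 0, hc⟩, g.1 0 0, g.1 1 1)
    invFun := fun s => match s with
      | Sum.inl (c, a, d) => mkSL a ((a * d - 1) / c.1) c.1 d (by
          have := c.2
          field_simp
          ring)
      | Sum.inr (a, b) => mkSL a.1 b 0 a.1⁻¹ (by simp [a.2])
    left_inv := by
      intro g
      have hdet := g.2
      rw [det_fin_two] at hdet
      by_cases hc : g.1 1 0 = 0
      · simp only [hc, dite_true]
        rw [hc] at hdet
        have ha : g.1 0 0 ≠ 0 := by rintro h; simp [h] at hdet
        ext i j
        fin_cases i <;> fin_cases j <;> simp [hc]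
        field_simp
        linear_combination -hdet
      · simp only [hc, dite_false]
        ext i j
        fin_cases i <;> fin_cases j <;> simp
        field_simp
        linear_combination hdet
    right_inv := by
      rintro (⟨c, a, d⟩ | ⟨a, b⟩)
      · simp [c.2]
      · simp }

lemma card_PSL2 [Fintype K] (h2 : (2 : K) ≠ 0) :
    2 * Nat.card (PSL2 K) = Fintype.card K * (Fintype.card K ^ 2 - 1) := by
  classical
  have hcenter : Nat.card (Subgroup.center (SpecialLinearGroup (Fin 2) K)) = 2 := by
    have : (Subgroup.center (SpecialLinearGroup (Fin 2) K) :
        Set (SpecialLinearGroup (Fin 2) K)) = {1, -1} := by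
      ext g; simpa using mem_center_SL2 g
    rw [← SetLike.coe_sort_coe, this, Nat.card_coe_set_eq, Set.ncard_pair]
    intro h
    have := congrArg (fun g : SpecialLinearGroup (Fin 2) K => g 0 0) h
    simp at this
    exact h2 (by linear_combination this)
  have h := Subgroup.card_eq_card_quotient_mul_card_subgroup
    (Subgroup.center (SpecialLinearGroup (Fin 2) K))
  rw [hcenter, Nat.card_congr (equivSL2 K), Nat.card_sum, Nat.card_prod, Nat.card_prod,
    Nat.card_prod] at h
  have hK : Nat.card {c : K // c ≠ 0} = Fintype.card K - 1 := by
    rw [Nat.card_eq_fintype_card, Fintype.card_subtype_compl]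
    simp
  rw [hK, Nat.card_eq_fintype_card] at h
  rw [mul_comm, ← h]
  obtain ⟨n, hn⟩ : ∃ n, Fintype.card K = n + 1 :=
    ⟨Fintype.card K - 1, by have := Fintype.card_pos (α := K); omega⟩
  have : (n + 1) ^ 2 - 1 = n ^ 2 + 2 * n := by
    rw [Nat.sub_eq_iff_eq_add (by nlinarith)]; ring
  rw [hn, this, Nat.add_sub_cancel]
  ring

end Card

/-! ### Automorphisms of `PSL(2,F)` -/

section Aut

variable {F : Type*} [Field F]

lemma up_pow_smul (w : Fˣ) (n : ℕ) : dg w ^ n * up 1 = up (((w : F) ^ 2) ^ n) * dg w ^ n := by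
  induction n with
  | zero => simp
  | succ n ih =>
    rw [pow_succ' (dg w), mul_assoc, ih, ← mul_assoc, dg_mul_up, ← mul_assoc, ← pow_succ', mul_assoc]

/-- An automorphism of `PSL(2,F)` that fixes `up 1` and a generator of the split torus is trivial.
It fixes all `up (w ^ (2 * n))`, hence all `up a`, because every element of `F` is a difference of
two squares. It moves the Weyl element within its torus coset, because the Weyl element inverts the
torus, and then fixes it by `dg_eq_one_of_cube`. -/
lemma aut_rigid [Finite F] (h2 : (2 : F) ≠ 0) {w : Fˣ} (hgen : ∀ x : Fˣ, x ∈ Subgroup.zpowers w)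
    (hw : (w : F) ^ 4 ≠ 1) (φ : MulAut (PSL2 F)) (hu : φ (up 1) = up 1)
    (hd : φ (dg w) = dg w) : φ = 1 := by
  have hpow : ∀ n : ℕ, φ (up (((w : F) ^ 2) ^ n)) = up (((w : F) ^ 2) ^ n) := by
    intro n
    have : up (((w : F) ^ 2) ^ n) = dg w ^ n * up 1 * (dg w ^ n)⁻¹ := by
      rw [up_pow_smul]; group
    rw [this]; simp [hu, hd]
  have hsq : ∀ a : F, φ (up (a ^ 2)) = up (a ^ 2) := by
    intro a
    by_cases ha : a = 0
    · rw [ha, zero_pow two_ne_zero, up_zero, map_one]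
    · have := hgen (Units.mk0 a ha)
      rw [← mem_powers_iff_mem_zpowers] at this
      obtain ⟨n, hn⟩ := this
      have hn' : (w : F) ^ n = a := by
        have := congrArg (Units.val) hn
        simpa using this
      rw [← hn', ← pow_mul, mul_comm, pow_mul]
      exact hpow n
  have hup : ∀ a : F, φ (up a) = up a := by
    intro a
    have hs : up a * up (((a - 1) / 2) ^ 2) = up (((a + 1) / 2) ^ 2) := by
      rw [up_mul]; congr 1; field_simp; ring
    have := congrArg φ hs
    rw [map_mul, hsq, hsq, ← hs] at this
    exact mul_right_cancel this
  have hwl : φ wl = wl := by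
    have hcomm : (φ wl * wl⁻¹) * dg w = dg w * (φ wl * wl⁻¹) := by
      have e1 : φ wl * dg w * (φ wl)⁻¹ = (dg w)⁻¹ := by
        have := congrArg φ (wl_mul_dg w)
        simpa [hd] using this
      have e2 : wl⁻¹ * (dg w) = (dg w)⁻¹ * wl⁻¹ := by
        have := congrArg (·⁻¹) (mul_inv_eq_iff_eq_mul.1 (wl_mul_dg w))
        simpa [_root_.mul_inv_rev] using this.symm
      have e3 : φ wl * (dg w)⁻¹ = dg w * φ wl := by
        rw [mul_inv_eq_iff_eq_mul, mul_assoc, mul_inv_eq_iff_eq_mul.1 e1, mul_inv_cancel_left]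
      rw [mul_assoc, e2, ← mul_assoc, e3, mul_assoc]
    obtain ⟨e, he⟩ := commute_dg hw hcomm
    have he' : φ wl = dg e * wl := by rw [← he]; group
    have hcube := congrArg φ (wl_up_cube (K := F))
    rw [map_pow, map_mul, hu, he', map_one] at hcube
    rw [he', dg_eq_one_of_cube hcube, one_mul]
  have htop := generated (MonoidHom.eqLocus (φ : PSL2 F →* PSL2 F) (MonoidHom.id _)) hwl hup
  ext x
  have : x ∈ MonoidHom.eqLocus (φ : PSL2 F →* PSL2 F) (MonoidHom.id _) := htop ▸ Subgroup.mem_top x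
  exact this

/-- An automorphism fixing `up 1` acts on the group of all `up a` semilinearly, so it maps
`dg w` to some `dg e * up b` with `e ^ 2` a conjugate of `w ^ 2` over the prime field. -/
lemma aut_dg (p : ℕ) [Fact p.Prime] [Algebra (ZMod p) F] (h2 : (2 : F) ≠ 0) (w : Fˣ)
    (φ : MulAut (PSL2 F)) (hu : φ (up 1) = up 1) :
    ∃ (e : Fˣ) (b : F), φ (dg w) = dg e * up b ∧
      Polynomial.aeval ((e : F) ^ 2) (minpoly (ZMod p) ((w : F) ^ 2)) = 0 := by
  have hex : ∀ a : F, ∃ c : F, φ (up a) = up c := by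
    intro a
    apply commute_up_one h2
    rw [← hu, ← map_mul, ← map_mul, up_mul, up_mul, add_comm]
  choose ψ hψ using hex
  have hadd : ∀ a b, ψ (a + b) = ψ a + ψ b := by
    intro a b
    apply up_inj h2
    rw [← hψ, ← up_mul, ← up_mul, map_mul, hψ, hψ]
  have hone : ψ 1 = 1 := up_inj h2 (by rw [← hψ, hu])
  have hsurj : ∀ c : F, ∃ a, ψ a = c := by
    intro c
    obtain ⟨a, ha⟩ : ∃ a, φ.symm (up c) = up a := by
      apply commute_up_one h2
      have hu' : φ.symm (up 1) = up 1 := by rw [MulEquiv.symm_apply_eq, hu]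
      rw [← hu', ← map_mul, ← map_mul, up_mul, up_mul, add_comm]
    refine ⟨a, up_inj h2 ?_⟩
    rw [← hψ, ← ha, MulEquiv.apply_symm_apply]
  choose χ hχ using hsurj
  have hmul : ∀ a, φ (dg w) * up (ψ a) = up (ψ ((w : F) ^ 2 * a)) * φ (dg w) := by
    intro a
    rw [← hψ, ← hψ, ← map_mul, ← map_mul, dg_mul_up]
  obtain ⟨e, b, heb, hc⟩ := borel (c := fun c => ψ ((w : F) ^ 2 * χ c)) h2 (h := φ (dg w)) (by
    intro c
    have := hmul (χ c)
    rwa [hχ] at this)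
  have hψe : ∀ a, ψ ((w : F) ^ 2 * a) = (e : F) ^ 2 * ψ a := by
    intro a
    have h1 := hmul a
    have h2' : φ (dg w) * up (ψ a) = up ((e : F) ^ 2 * ψ a) * φ (dg w) := by
      rw [← hc (ψ a)]
      have := hmul (χ (ψ a))
      rwa [hχ] at this
    exact up_inj h2 (mul_right_cancel (h1.symm.trans h2'))
  have hψpow : ∀ n : ℕ, ψ (((w : F) ^ 2) ^ n) = ((e : F) ^ 2) ^ n := by
    intro n
    induction n with
    | zero => simpa using hone
    | succ n ih => rw [pow_succ' ((w : F) ^ 2), hψe, ih, pow_succ' ((e : F) ^ 2)]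
  refine ⟨e, b, heb, ?_⟩
  let L : F →ₗ[ZMod p] F := AddMonoidHom.toZModLinearMap p (AddMonoidHom.mk' ψ hadd)
  have hL : ∀ x, L x = ψ x := fun _ => rfl
  have h0 := minpoly.aeval (ZMod p) ((w : F) ^ 2)
  have := congrArg L h0
  rw [Polynomial.aeval_eq_sum_range, map_sum, map_zero] at this
  rw [Polynomial.aeval_eq_sum_range, ← this]
  refine Finset.sum_congr rfl fun i _ => ?_
  rw [map_smul, hL, hψpow]

/-- Orbit-stabilizer, with the orbit bounded by a set containing it. -/
lemma card_le_of_orbit {A S : Type*} [Group A] [Finite A] [MulAction A S] (x : S) (T : Set S)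
    (hT : T.Finite) (horb : ∀ a : A, a • x ∈ T) {m n : ℕ} (hm : T.ncard ≤ m)
    (hn : Nat.card (MulAction.stabilizer A x) ≤ n) : Nat.card A ≤ m * n := by
  rw [← Subgroup.card_mul_index (MulAction.stabilizer A x), MulAction.index_stabilizer, mul_comm]
  apply Nat.mul_le_mul _ hn
  refine (Set.ncard_le_ncard ?_ hT).trans hm
  rintro _ ⟨a, rfl⟩
  exact horb a

/-- `|Aut(PSL(2,q))| ≤ 2 f |PSL(2,q)|` for `q = p ^ f` odd and greater than `5`; the
right-hand side is written out in terms of `q`. -/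
theorem card_mulAut_le [Fintype F] (p f : ℕ) [hp : Fact p.Prime] [CharP F p] (hodd : Odd p)
    (hcard : Fintype.card F = p ^ f) (h5 : 5 < Fintype.card F) :
    Nat.card (MulAut (PSL2 F)) ≤
      (Fintype.card F ^ 2 - 1) * (f * Fintype.card F) := by
  classical
  let _ : Algebra (ZMod p) F := ZMod.algebra F p
  have h2 : (2 : F) ≠ 0 := by
    intro h
    have := (CharP.cast_eq_zero_iff F p 2).1 (by exact_mod_cast h)
    have := (Nat.prime_dvd_prime_iff_eq hp.out Nat.prime_two).1 this
    subst this
    exact absurd hodd (by decide)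
  have hfin : Module.finrank (ZMod p) F = f := by
    have h := Module.card_eq_pow_finrank (K := ZMod p) (V := F)
    rw [hcard, ZMod.card] at h
    exact (Nat.pow_right_injective hp.out.two_le h).symm
  obtain ⟨w, hw⟩ := IsCyclic.exists_generator (α := Fˣ)
  have hw4 : (w : F) ^ 4 ≠ 1 := by
    intro h
    have hu : w ^ 4 = 1 := by ext; simpa using h
    have h1 := orderOf_le_of_pow_eq_one (by norm_num) hu
    rw [orderOf_eq_card_of_forall_mem_zpowers hw, Nat.card_eq_fintype_card, Fintype.card_units] at h1
    omega
  have : Finite (MulAut (PSL2 F)) :=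
    Finite.of_injective (fun φ : MulAut (PSL2 F) => (φ : PSL2 F → PSL2 F)) DFunLike.coe_injective
  let P1 : Finset (F × F) := Finset.univ.erase 0
  let Φ1 : F × F → PSL2 F := fun x => if x.2 = 0 then lo x.1 else lo x.1 * up x.2 * lo (-x.1)
  let rt : F → Fˣ := fun ρ => if h : ∃ e : Fˣ, (e : F) ^ 2 = ρ then h.choose else 1
  let P2 : Finset (F × F) := ((minpoly (ZMod p) ((w : F) ^ 2)).aroots F).toFinset ×ˢ Finset.univ
  let Φ2 : F × F → PSL2 F := fun x => dg (rt x.1) * up x.2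
  have hwint : IsIntegral (ZMod p) ((w : F) ^ 2) := Algebra.IsIntegral.isIntegral _
  have hP1 : P1.card = Fintype.card F ^ 2 - 1 := by
    simp [P1, sq]
  have hP2 : P2.card ≤ f * Fintype.card F := by
    rw [Finset.card_product, Finset.card_univ]
    apply Nat.mul_le_mul_right
    calc _ ≤ _ := Multiset.toFinset_card_le _
      _ ≤ _ := Polynomial.card_roots' _
      _ = (minpoly (ZMod p) ((w : F) ^ 2)).natDegree := Polynomial.natDegree_map _
      _ ≤ Module.finrank (ZMod p) F := minpoly.natDegree_le _
      _ = f := hfin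
  refine card_le_of_orbit (up 1) (Φ1 '' P1) (Set.toFinite _) ?_
    ((Set.ncard_image_le (Finset.finite_toSet _)).trans (by rw [Set.ncard_coe_finset, hP1])) ?_
  · intro φ
    rw [MulAut.smul_def]
    have hne : φ (up 1) ≠ 1 := by
      rw [Ne, MulEquiv.map_eq_one_iff]
      intro h
      exact one_ne_zero (up_inj h2 (h.trans up_zero.symm))
    have hpow : ∀ n : ℕ, up (1 : F) ^ n = up (n : F) := by
      intro n
      induction n with
      | zero => simp [up_zero]
      | succ n ih => rw [pow_succ, ih, up_mul]; push_cast; rfl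
    have hpp : φ (up 1) ^ p = 1 := by
      rw [← map_pow, hpow, CharP.cast_eq_zero]
      rw [up_zero, map_one]
    rcases order_p_subset p hodd hne hpp with ⟨a, ha, h⟩ | ⟨a, b, hb, h⟩
    · exact ⟨(a, 0), by simp [P1, ha], by simp [Φ1, h]⟩
    · exact ⟨(a, b), by simp [P1, hb], by simp [Φ1, h, hb]⟩
  · rw [← mul_one (f * Fintype.card F)]
    refine card_le_of_orbit (dg w) (Φ2 '' P2) (Set.toFinite _) ?_
      ((Set.ncard_image_le (Finset.finite_toSet _)).trans (by rwa [Set.ncard_coe_finset])) ?_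
    · rintro ⟨φ, hφ⟩
      have hφ' : φ (up 1) = up 1 := hφ
      obtain ⟨e, b, heb, hroot⟩ := aut_dg p h2 w φ hφ'
      refine ⟨((e : F) ^ 2, b), ?_, ?_⟩
      · simp only [P2, Finset.coe_product, Set.mem_prod, Finset.mem_coe, Multiset.mem_toFinset,
          Finset.mem_univ, and_true]
        exact (Polynomial.mem_aroots).2 ⟨minpoly.ne_zero hwint, hroot⟩
      · have hex : ∃ e' : Fˣ, (e' : F) ^ 2 = (e : F) ^ 2 := ⟨e, rfl⟩
        have hrt : rt ((e : F) ^ 2) = hex.choose := dif_pos hex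
        have hs := hex.choose_spec
        rw [← hrt] at hs
        have hdg : dg (rt ((e : F) ^ 2)) = dg e := by
          rcases sq_eq_sq_iff_eq_or_eq_neg.1 hs with h | h
          · rw [Units.ext h]
          · have h' : rt ((e : F) ^ 2) = -e := Units.ext (by simpa using h)
            rw [h', dg, dg, proj_eq_iff]
            right
            ext i j
            fin_cases i <;> fin_cases j <;> simp
        change dg (rt ((e : F) ^ 2)) * up b = φ (dg w)
        rw [hdg, heb]
    · rw [Finite.card_le_one_iff_subsingleton]
      constructor
      have key : ∀ x : MulAction.stabilizer (MulAction.stabilizer (MulAut (PSL2 F)) (up (1 : F)))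
          (dg w), x = 1 := by
        rintro ⟨⟨φ, hφ⟩, hφ'⟩
        have := aut_rigid h2 hw hw4 φ hφ hφ'
        subst this
        rfl
      intro x y
      rw [key x, key y]

end Aut

/-! ### Counting in designs and Fisher's inequality -/

section Design

open Classical in
/-- The entry of the incidence matrix at the point `x` and the block `B`. -/
noncomputable def inc (B : Set Pt) (x : Pt) : ℕ := if x ∈ B then 1 else 0

lemma inc_mul_self (B : Set Pt) (x : Pt) : inc B x * inc B x = inc B x := by
  unfold inc; split_ifs <;> simp

/-- The standard counts of a design, and Fisher's inequality in the form `k ≤ r`. The latter holds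
because the rows of the incidence matrix are linearly independent: for a rational vector `c`,
`∑ B, (∑ x ∈ B, c x) ^ 2 = (r - 3) * ∑ x, c x ^ 2 + 3 * (∑ x, c x) ^ 2`. -/
lemma design_facts [Fintype Pt] {𝓑 : Set (Set Pt)} {v k r : ℕ} (hv : Nat.card Pt = v)
    (hD : IsDesign 𝓑 k 3) (hk : 2 < k) (hkv : k < v - 1) (hr : ∀ x : Pt, repNum 𝓑 x = r) :
    r * k = r + 3 * (v - 1) ∧ k ≤ r := by
  classical
  obtain ⟨Bs, hBs⟩ : ∃ Bs : Finset (Set Pt), ∀ B, B ∈ Bs ↔ B ∈ 𝓑 :=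
    ⟨𝓑.toFinset, fun B => Set.mem_toFinset⟩
  have hcard : Fintype.card Pt = v := by rw [← hv, Nat.card_eq_fintype_card]
  have h1 : ∀ x, ∑ B ∈ Bs, inc B x = r := by
    intro x
    rw [← hr x, repNum, Nat.card_coe_set_eq]
    simp only [inc, Finset.sum_boole, Nat.cast_id]
    rw [← Set.ncard_coe_finset]
    congr 1; ext B; simp [hBs]
  have h2 : ∀ x y, x ≠ y → ∑ B ∈ Bs, inc B x * inc B y = 3 := by
    intro x y hxy
    rw [← hD.pair_count x y hxy, Nat.card_coe_set_eq]
    simp only [inc, ← ite_and, mul_ite, mul_one, mul_zero, Finset.sum_boole, Nat.cast_id]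
    rw [← Set.ncard_coe_finset]
    congr 1; ext B; simp [hBs]; tauto
  have h3 : ∀ B ∈ Bs, ∑ x, inc B x = k := by
    intro B hB
    rw [← hD.block_card B ((hBs B).1 hB), Nat.card_coe_set_eq]
    simp only [inc, Finset.sum_boole, Nat.cast_id]
    rw [← Set.ncard_coe_finset]
    congr 1; ext x; simp
  have hne : 0 < Fintype.card Pt := by omega
  obtain ⟨x0⟩ := Fintype.card_pos_iff.1 hne
  have hrk : r * k = r + 3 * (v - 1) := by
    calc r * k = ∑ B ∈ Bs, inc B x0 * ∑ y, inc B y := by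
          rw [← h1 x0, Finset.sum_mul]
          exact Finset.sum_congr rfl fun B hB => by rw [h3 B hB]
      _ = ∑ y, ∑ B ∈ Bs, inc B x0 * inc B y := by
          simp_rw [Finset.mul_sum]; exact Finset.sum_comm
      _ = ∑ B ∈ Bs, inc B x0 * inc B x0 +
            ∑ y ∈ Finset.univ.erase x0, ∑ B ∈ Bs, inc B x0 * inc B y :=
          (Finset.add_sum_erase _ _ (Finset.mem_univ x0)).symm
      _ = r + ∑ y ∈ Finset.univ.erase x0, 3 := by
          congr 1
          · simp_rw [inc_mul_self]; exact h1 x0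
          · exact Finset.sum_congr rfl fun y hy => h2 _ _ (Finset.ne_of_mem_erase hy).symm
      _ = r + 3 * (v - 1) := by
          rw [Finset.sum_const, Finset.card_erase_of_mem (Finset.mem_univ _), Finset.card_univ,
            hcard, smul_eq_mul, mul_comm]
  refine ⟨hrk, ?_⟩
  have hbk : Bs.card * k = v * r := by
    calc Bs.card * k = ∑ B ∈ Bs, ∑ x, inc B x := by
          rw [Finset.sum_congr rfl h3, Finset.sum_const, smul_eq_mul]
      _ = ∑ x, ∑ B ∈ Bs, inc B x := Finset.sum_comm
      _ = v * r := by
          rw [Finset.sum_congr rfl fun x _ => h1 x, Finset.sum_const, Finset.card_univ, hcard,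
            smul_eq_mul]
  have hr3 : 3 < r := by
    by_contra h
    obtain ⟨k', rfl⟩ : ∃ k', k = k' + 1 := ⟨k - 1, by omega⟩
    have : r * k' = 3 * (v - 1) := by linarith [mul_add r k' 1]
    have : r * k' ≤ 3 * k' := Nat.mul_le_mul_right _ (by omega)
    omega
  have hli : LinearIndependent ℚ (fun (x : Pt) (B : Bs) => (inc B.1 x : ℚ)) := by
    rw [Fintype.linearIndependent_iff]
    intro c hc
    have hB : ∀ B ∈ Bs, ∑ x, c x * (inc B x : ℚ) = 0 := by
      intro B hB
      have := congrFun hc ⟨B, hB⟩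
      simpa using this
    have hquad : ∑ B ∈ Bs, (∑ x, c x * (inc B x : ℚ)) ^ 2 =
        (r - 3) * ∑ x, c x ^ 2 + 3 * (∑ x, c x) ^ 2 := by
      calc _ = ∑ x, ∑ y, c x * c y * ((∑ B ∈ Bs, inc B x * inc B y : ℕ) : ℚ) := by
            simp_rw [sq, Finset.sum_mul_sum]
            rw [Finset.sum_comm]
            refine Finset.sum_congr rfl fun x _ => ?_
            rw [Finset.sum_comm]
            refine Finset.sum_congr rfl fun y _ => ?_
            push_cast
            rw [Finset.mul_sum]
            exact Finset.sum_congr rfl fun B _ => by ring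
        _ = ∑ x, ∑ y, (c x * c y * 3 + if x = y then c x * c y * (r - 3) else 0) := by
            refine Finset.sum_congr rfl fun x _ => Finset.sum_congr rfl fun y _ => ?_
            by_cases hxy : x = y
            · subst hxy
              simp_rw [inc_mul_self]
              rw [h1 x, if_pos trivial]; ring
            · rw [h2 x y hxy, if_neg hxy]; simp
        _ = _ := by
            simp_rw [Finset.sum_add_distrib]
            simp only [Finset.sum_ite_eq, Finset.mem_univ, if_true]
            simp_rw [sq, Finset.sum_mul_sum, Finset.mul_sum]
            rw [add_comm]
            congr 1
            · exact Finset.sum_congr rfl fun x _ => by ring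
            · exact Finset.sum_congr rfl fun x _ => Finset.sum_congr rfl fun y _ => by ring
    rw [Finset.sum_congr rfl fun B h => by rw [hB B h], Finset.sum_eq_zero (by simp)] at hquad
    have hr3' : (3 : ℚ) < r := by exact_mod_cast hr3
    have hs : ∑ x, c x ^ 2 = 0 := by
      have hnn : 0 ≤ ∑ x, c x ^ 2 := Finset.sum_nonneg fun x _ => sq_nonneg _
      nlinarith [sq_nonneg (∑ x, c x)]
    intro x
    have := (Finset.sum_eq_zero_iff_of_nonneg fun x _ => sq_nonneg (c x)).1 hs x (Finset.mem_univ _)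
    exact pow_eq_zero_iff two_ne_zero |>.1 this
  have hvb : v ≤ Bs.card := by
    have := hli.fintype_card_le_finrank
    rwa [Module.finrank_fintype_fun_eq_card, Fintype.card_coe, hcard] at this
  by_contra h
  have : v * r < Bs.card * k := by
    calc v * r < v * k := Nat.mul_lt_mul_of_pos_left (by omega) (by omega)
      _ ≤ Bs.card * k := Nat.mul_le_mul_right _ hvb
  omega

end Design

/-! ### Arithmetic -/

section Arithmetic

/-- The numerical core: `v = q₀^(t-1) * ∑ q₀^(2i)` is congruent to `t` modulo `q₀² - 1` and
divisible by `q₀`, so its predecessor shares with `q₀ (q₀² - 1)` only a divisor of `t - 1`. -/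
lemma gcd_dvd {q₀ t v d : ℕ} (hq : 3 ≤ q₀) (ht : Odd t) (ht3 : 3 ≤ t)
    (hv : v = q₀ ^ (t - 1) * ∑ i ∈ Finset.range t, (q₀ ^ 2) ^ i)
    (hd : d ∣ q₀ * (q₀ ^ 2 - 1)) (hdv : d ∣ v - 1) : d ∣ t - 1 := by
  have hvpos : 1 ≤ v := by
    rw [hv]
    refine Nat.mul_pos (by positivity) (Finset.sum_pos (fun i _ => by positivity) ⟨0, by simp; omega⟩)
  have hcop : Nat.Coprime d q₀ := by
    have h1 : q₀ ∣ v := by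
      rw [hv]; exact (dvd_pow_self _ (by omega)).mul_right _
    have : Nat.Coprime (v - 1) v := by
      rw [Nat.coprime_comm]
      exact (Nat.coprime_self_sub_right hvpos).2 (Nat.coprime_one_right v)
    exact (this.coprime_dvd_left hdv).coprime_dvd_right h1
  have hd' : d ∣ q₀ ^ 2 - 1 := hcop.dvd_of_dvd_mul_left hd
  have hq1 : 1 ≤ q₀ ^ 2 := Nat.one_le_pow _ _ (by omega)
  have hmod : 1 ≡ q₀ ^ 2 [MOD d] := (Nat.modEq_iff_dvd' hq1).2 hd'
  have hvt : v ≡ t [MOD d] := by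
    rw [hv]
    obtain ⟨s, hs⟩ := ht
    have hpow : q₀ ^ (t - 1) = (q₀ ^ 2) ^ s := by rw [← pow_mul]; congr 1; omega
    have hsum : ∑ i ∈ Finset.range t, (q₀ ^ 2) ^ i ≡ ∑ i ∈ Finset.range t, 1 [MOD d] := by
      apply Nat.ModEq.sum
      intro i _
      simpa using (hmod.pow i).symm
    rw [hpow]
    simpa using (hmod.pow s).symm.mul hsum
  have h1v : 1 ≡ v [MOD d] := (Nat.modEq_iff_dvd' hvpos).2 hdv
  exact (Nat.modEq_iff_dvd' (by omega)).1 (h1v.trans hvt)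

lemma growth {n : ℕ} (hn : 2 ≤ n) : 27 * n ^ 4 < 27 ^ n := by
  induction n, hn using Nat.le_induction with
  | base => norm_num
  | succ n hn ih =>
    have : (n + 1) ^ 4 ≤ 27 * n ^ 4 := by
      calc (n + 1) ^ 4 ≤ (2 * n) ^ 4 := Nat.pow_le_pow_left (by omega) 4
        _ = 16 * n ^ 4 := by ring
        _ ≤ _ := by omega
    rw [pow_succ 27]
    omega

/-- Fisher's inequality gives `3 v ≤ r²`, which is incompatible with `r ≤ 3 m (t - 1)`,
`m ≤ 2 f₀ t`, as `v` is at least `p ^ (3 f₀ (t - 1))`. -/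
lemma numeric {p f₀ t v m r k : ℕ} (hp : 3 ≤ p) (hf : 1 ≤ f₀) (ht : 3 ≤ t)
    (hv : v = (p ^ f₀) ^ (t - 1) * ∑ i ∈ Finset.range t, ((p ^ f₀) ^ 2) ^ i)
    (hm : m ≤ 2 * (f₀ * t)) (hrm : r ≤ 3 * m * (t - 1)) (hrk : r * k = r + 3 * (v - 1))
    (hkr : k ≤ r) (hk : 2 < k) : False := by
  obtain ⟨s, rfl⟩ : ∃ s, t = s + 1 := ⟨t - 1, by omega⟩
  rw [Nat.add_sub_cancel] at *
  have hvlow : 27 ^ (f₀ * s) ≤ v := by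
    calc 27 ^ (f₀ * s) = (3 ^ f₀) ^ s * ((3 ^ f₀) ^ 2) ^ s := by
          rw [show (27 : ℕ) = 3 ^ 3 by norm_num]
          simp only [← pow_mul, ← pow_add]
          congr 1; ring
      _ ≤ (p ^ f₀) ^ s * ((p ^ f₀) ^ 2) ^ s := by gcongr
      _ ≤ v := by
          rw [hv]
          gcongr
          exact Finset.single_le_sum (f := fun i => ((p ^ f₀) ^ 2) ^ i) (fun i _ => Nat.zero_le _)
            (by simp)
  have hg := growth (n := f₀ * s) (by nlinarith)
  have h3v : 3 * v ≤ r ^ 2 := by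
    have : r * k ≤ r ^ 2 := by rw [sq]; exact Nat.mul_le_mul_left _ hkr
    omega
  have hr : r ≤ 9 * (f₀ * s) ^ 2 := by
    have h1 : r ≤ 3 * (2 * (f₀ * (s + 1))) * s := hrm.trans (by gcongr)
    have h2 : 3 * (2 * (f₀ * (s + 1))) * s ≤ 9 * f₀ * s ^ 2 := by
      have : 2 * (s + 1) ≤ 3 * s := by omega
      calc 3 * (2 * (f₀ * (s + 1))) * s = 3 * f₀ * s * (2 * (s + 1)) := by ring
        _ ≤ 3 * f₀ * s * (3 * s) := by gcongr
        _ = _ := by ring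
    have h3 : 9 * f₀ * s ^ 2 ≤ 9 * (f₀ * s) ^ 2 := by
      rw [mul_pow, ← mul_assoc]
      gcongr
      nlinarith
    omega
  have hr2 : r ^ 2 ≤ 81 * (f₀ * s) ^ 4 := by
    calc r ^ 2 ≤ (9 * (f₀ * s) ^ 2) ^ 2 := by gcongr
      _ = _ := by ring
  omega

end Arithmetic

/-! ### Group actions on the design -/

section Main

lemma two_ne_zero_of_odd_char {K : Type*} [Field K] (p : ℕ) [CharP K p] (hp : p.Prime)
    (hodd : Odd p) : (2 : K) ≠ 0 := by
  intro h
  have := (CharP.cast_eq_zero_iff K p 2).1 (by exact_mod_cast h)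
  have := (Nat.prime_dvd_prime_iff_eq hp Nat.prime_two).1 this
  subst this
  exact absurd hodd (by decide)

/-- By flag-transitivity, the stabilizer of a point permutes the blocks through it transitively. -/
lemma rep_dvd_card_stabilizer {G : Type*} [Group G] [Finite G] [MulAction G Pt]
    {𝓑 : Set (Set Pt)} (hacts : ActsOn G 𝓑) (hflag : FlagTransitive G 𝓑) (α : Pt) {r : ℕ}
    (hr : repNum 𝓑 α = r) (hr0 : r ≠ 0) : r ∣ Nat.card (MulAction.stabilizer G α) := by
  have hne : Nonempty {B : Set Pt | B ∈ 𝓑 ∧ α ∈ B} := by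
    by_contra h
    rw [not_nonempty_iff] at h
    rw [repNum, Nat.card_of_isEmpty] at hr
    exact hr0 hr.symm
  obtain ⟨B, hB, hαB⟩ := hne
  have horb : MulAction.orbit (MulAction.stabilizer G α) B = {C : Set Pt | C ∈ 𝓑 ∧ α ∈ C} := by
    ext C
    constructor
    · rintro ⟨⟨g, hg⟩, rfl⟩
      refine ⟨hacts g B hB, ?_⟩
      have hg' : g • α = α := hg
      change α ∈ g • B
      rw [← hg']
      exact Set.smul_mem_smul_set hαB
    · rintro ⟨hC, hαC⟩
      obtain ⟨g, hgB, hgα⟩ := hflag B hB C hC α hαB α hαC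
      exact ⟨⟨g, hgα⟩, hgB⟩
  have := Subgroup.index_dvd_card
    (MulAction.stabilizer (MulAction.stabilizer G α) B)
  rw [MulAction.index_stabilizer, horb] at this
  rwa [← hr, repNum, Nat.card_coe_set_eq]

/-- A group acts faithfully by conjugation on a normal subgroup with trivial centralizer. -/
lemma card_le_card_mulAut {G M : Type*} [Group G] [Group M] [Finite M] (X : Subgroup G)
    [X.Normal] (e : X ≃* M) (hX : Subgroup.centralizer (X : Set G) = ⊥) :
    Nat.card G ≤ Nat.card (MulAut M) := by
  have : Finite (MulAut M) :=
    Finite.of_injective (fun φ : MulAut M => (φ : M → M)) DFunLike.coe_injective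
  let c : G →* MulAut M := (MulAut.congr e).toMonoidHom.comp MulAut.conjNormal
  apply Nat.card_le_card_of_injective c
  rw [injective_iff_map_eq_one]
  intro g hg
  have hg' : MulAut.conjNormal (H := X) g = 1 := by
    apply (MulAut.congr e).injective
    rw [map_one]
    exact hg
  rw [← Subgroup.mem_bot, ← hX, Subgroup.mem_centralizer_iff]
  intro x hx
  have h1 := congrArg (fun φ : MulAut X => ((φ ⟨x, hx⟩ : X) : G)) hg'
  simp only [MulAut.conjNormal_apply, MulAut.one_apply] at h1
  rw [mul_inv_eq_iff_eq_mul] at h1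
  exact h1.symm

/-- The degree of the action of `PSL(2,q₀ᵗ)` on the cosets of `PSL(2,q₀)`. -/
lemma degree_eq {q₀ t v : ℕ} (hq : 2 ≤ q₀) (ht : 1 ≤ t)
    (h : v * (q₀ * (q₀ ^ 2 - 1)) = q₀ ^ t * ((q₀ ^ t) ^ 2 - 1)) :
    v = q₀ ^ (t - 1) * ∑ i ∈ Finset.range t, (q₀ ^ 2) ^ i := by
  have hx : 4 ≤ q₀ ^ 2 := by nlinarith
  obtain ⟨x, hx'⟩ : ∃ x, q₀ ^ 2 = x + 1 := ⟨q₀ ^ 2 - 1, by omega⟩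
  have hgeom := geom_sum_mul_add x t
  rw [← hx'] at hgeom
  have hsub : (q₀ ^ t) ^ 2 - 1 = (∑ i ∈ Finset.range t, (q₀ ^ 2) ^ i) * x := by
    rw [← pow_mul, mul_comm t 2, pow_mul, ← hgeom, Nat.add_sub_cancel]
  have hx1 : q₀ ^ 2 - 1 = x := by omega
  rw [hsub, hx1] at h
  have hpow : q₀ ^ t = q₀ ^ (t - 1) * q₀ := by rw [← pow_succ]; congr 1; omega
  rw [hpow] at h
  have hpos : 0 < q₀ * x := Nat.mul_pos (by omega) (by omega)
  apply Nat.eq_of_mul_eq_mul_right hpos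
  rw [h]; ring

end Main

end FT

open FT

/-- In the setting of a non-trivial, non-symmetric flag-transitive,
point-primitive `2-(v,k,3)` design with `3 ∣ r`, almost simple automorphism group `G` with
socle `X ≅ PSL(2,q)` acting point-primitively with maximal point stabilizer `X_α`:
the stabilizer `X_α` is not isomorphic to a subfield subgroup `PSL(2,q₀)` with `q = q₀ᵗ`
odd and `t` an odd prime. -/
theorem stmt_10
    (q : ℕ) (hq4 : 4 ≤ q)
    (F : Type) [Field F] [Fintype F] (hF : Fintype.card F = q)
    {Pt : Type*} [Fintype Pt] {G : Type*} [Group G] [MulAction G Pt] [FaithfulSMul G Pt]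
    -- `D = (Pt, 𝓑)` is a non-trivial, non-symmetric `2-(v,k,3)` design …
    (𝓑 : Set (Set Pt)) (v k : ℕ) (hv : Nat.card Pt = v)
    (hD : IsDesign 𝓑 k 3) (hnt : 2 < k ∧ k < v - 1)
    (hnonsym : Nat.card 𝓑 ≠ v)
    -- … whose replication number `r` is divisible by 3, …
    (r : ℕ) (hr : ∀ x : Pt, repNum 𝓑 x = r) (h3r : 3 ∣ r)
    -- … admitting the flag-transitive, point-primitive automorphism group `G`, …
    (hacts : ActsOn G 𝓑) (hflag : FlagTransitive G 𝓑)
    (hprim : PointPrimitive G Pt)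
    -- … where `G` is almost simple with socle `X ≅ PSL(2,q)` (so `PSL(2,q) ⊴ G ≤ PΓL(2,q)`):
    (X : Subgroup G) (hXnormal : X.Normal)
    (hXiso : Nonempty (X ≃* PSL2 F))
    (hXcent : Subgroup.centralizer (X : Set G) = ⊥)
    -- `X` acts point-primitively on `D`, with maximal point stabilizer `X_α`:
    (hXprim : PointPrimitive X Pt)
    (α : Pt) (hmax : IsCoatom (MulAction.stabilizer X α))
    :
    ∀ (q₀ t : ℕ) (F₀ : Type) [Field F₀] [Fintype F₀], Fintype.card F₀ = q₀ →
      t.Prime → Odd t → q = q₀ ^ t → Odd q →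
      IsEmpty ((MulAction.stabilizer X α) ≃* PSL2 F₀) := by
  intro q₀ t F₀ _ _ hF₀ ht htodd hqt hqodd
  refine ⟨fun e => ?_⟩
  obtain ⟨eX⟩ := hXiso
  have ht3 : 3 ≤ t := by
    have := ht.two_le
    obtain ⟨s, rfl⟩ := htodd
    omega
  -- `q₀ = p ^ f₀` and `F` has the same characteristic `p`
  obtain ⟨p, hpF₀⟩ := CharP.exists F₀
  obtain ⟨f₀, hp, hcF₀⟩ := FiniteField.card F₀ p
  obtain ⟨p', hpF⟩ := CharP.exists F
  obtain ⟨f', hp', hcF⟩ := FiniteField.card F p'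
  have hq₀ : q₀ = p ^ (f₀ : ℕ) := hF₀.symm.trans hcF₀
  have hqp : q = p ^ ((f₀ : ℕ) * t) := by rw [hqt, hq₀, ← pow_mul]
  obtain rfl : p' = p := by
    have h1 : p' ∣ p ^ ((f₀ : ℕ) * t) := by
      rw [← hqp, ← hF, hcF]; exact dvd_pow_self _ f'.ne_zero
    exact (Nat.prime_dvd_prime_iff_eq hp' hp).1 (hp'.dvd_of_dvd_pow h1)
  have : Fact p'.Prime := ⟨hp⟩
  have hpodd : Odd p' := by
    rw [hqp] at hqodd
    exact hqodd.of_dvd_nat (dvd_pow_self _ (Nat.mul_ne_zero f₀.ne_zero ht.ne_zero))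
  have hp3 : 3 ≤ p' := by
    have := hp.two_le
    obtain ⟨s, hs⟩ := hpodd
    omega
  have hq₀3 : 3 ≤ q₀ := by
    rw [hq₀]; exact hp3.trans (Nat.le_self_pow f₀.ne_zero _)
  have hq27 : 27 ≤ q := by
    calc 27 = 3 ^ 3 := by norm_num
      _ ≤ q₀ ^ 3 := Nat.pow_le_pow_left hq₀3 3
      _ ≤ q₀ ^ t := Nat.pow_le_pow_right (by omega) ht3
      _ = q := hqt.symm
  obtain ⟨hrk, hkr⟩ := design_facts hv hD hnt.1 hnt.2 hr
  have hr0 : r ≠ 0 := by omega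
  have hGfin : Finite G :=
    Finite.of_injective (MulAction.toPermHom G Pt) MulAction.toPerm_injective
  have cX : 2 * Nat.card X = q * (q ^ 2 - 1) := by
    rw [Nat.card_congr eX.toEquiv, card_PSL2 F (two_ne_zero_of_odd_char p' hp hpodd), hF]
  have cS : 2 * Nat.card (MulAction.stabilizer X α) = q₀ * (q₀ ^ 2 - 1) := by
    rw [Nat.card_congr e.toEquiv, card_PSL2 F₀ (two_ne_zero_of_odd_char p' hp hpodd), hF₀]
  have hXt : MulAction.IsPretransitive X Pt := hXprim.1
  have hGt : MulAction.IsPretransitive G Pt := hprim.1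
  have hXS := Subgroup.card_mul_index (MulAction.stabilizer X α)
  have hGS := Subgroup.card_mul_index (MulAction.stabilizer G α)
  rw [MulAction.index_stabilizer_of_transitive, hv] at hXS hGS
  have hXG := Subgroup.card_mul_index X
  set m := X.index
  have hvform := degree_eq (q₀ := q₀) (t := t) (v := v) (by omega) (by omega) (by
    rw [← hqt, ← cS, ← cX, ← hXS]; ring)
  have hXpos : 0 < Nat.card X := Nat.card_pos
  -- `G` embeds in `Aut X`, and `|G| = m * |X|`
  have hm : m ≤ 2 * (f₀ * t) := by
    have h1 := card_le_card_mulAut X eX hXcent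
    have h2 := card_mulAut_le (F := F) p' (f₀ * t) hpodd (hF.trans hqp) (by omega)
    rw [hF] at h2
    apply Nat.le_of_mul_le_mul_left _ hXpos
    calc Nat.card X * m = Nat.card G := hXG
      _ ≤ _ := h1.trans h2
      _ = (q * (q ^ 2 - 1)) * (f₀ * t) := by ring
      _ = Nat.card X * (2 * (f₀ * t)) := by rw [← cX]; ring
  have hGα : Nat.card (MulAction.stabilizer G α) = m * Nat.card (MulAction.stabilizer X α) := by
    apply Nat.eq_of_mul_eq_mul_right (show 0 < v by omega)
    rw [hGS, ← hXG, ← hXS]; ring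
  have hrG := rep_dvd_card_stabilizer hacts hflag α (hr α) hr0
  rw [hGα] at hrG
  have hr3v : r ∣ 3 * (v - 1) := by
    have h1 : r ∣ r + 3 * (v - 1) := hrk ▸ Dvd.intro _ rfl
    exact (Nat.dvd_add_right (dvd_refl r)).1 h1
  -- `r` divides `3 * m * gcd (v - 1) |X_α|`, and the greatest common divisor divides `t - 1`
  have hrdvd : r ∣ 3 * m * (t - 1) := by
    have hd : Nat.gcd (v - 1) (Nat.card (MulAction.stabilizer X α)) ∣ t - 1 :=
      gcd_dvd hq₀3 htodd ht3 hvform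
        ((Nat.gcd_dvd_right _ _).trans (cS ▸ Dvd.intro_left 2 rfl)) (Nat.gcd_dvd_left _ _)
    refine dvd_trans ?_ (Nat.mul_dvd_mul_left (3 * m) hd)
    rw [← Nat.gcd_mul_left]
    apply Nat.dvd_gcd
    · rw [mul_comm 3 m, mul_assoc]; exact hr3v.mul_left m
    · rw [mul_assoc]; exact hrG.mul_left 3
  have hm0 : 0 < m := Nat.pos_of_ne_zero (by
    intro h
    rw [h, mul_zero] at hXG
    exact Nat.card_pos.ne hXG)
  have hrle : r ≤ 3 * m * (t - 1) :=
    Nat.le_of_dvd (Nat.mul_pos (by omega) (by omega)) hrdvd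
  rw [hq₀] at hvform
  exact numeric hp3 f₀.pos ht3 hvform hm hrle hrk hkr hnt.1
end

section
/- Let D be a non-trivial, non-symmetric 2-(v,k,3) design with 3 dividing r, admitting a flag-transitive, point-primitive automorphism group G that is almost simple with socle X = PSL(2,q), where X acts point-primitively on D with point stabilizer X_α maximal in X. Then X_α is not isomorphic to PGL(2,q₀) with q = 2^f = q₀ᵗ, t prime and q₀ ≠ 2; that is, the even-characteristic subfield case with v = q₀^{t−1}(q₀^{2t}−1)/(q₀²−1) does not occur. -/
/-!
Suppose the point stabilizer `X_α` is `PGL(2, q₀)` with `q = q₀ᵗ` and `q₀ = 2ˢ`, `s ≥ 2`. Orders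
alone give a contradiction.

* Counting incidences gives `r (k - 1) = 3 (v - 1)`, and Fisher's inequality gives `k ≤ r`
  (`design_counts`), so `r` divides `3 (v - 1)` and `3 (v - 1) < r²`.
* Flag-transitivity makes `r` a divisor of `|G_α| = |G : X| |X_α| = |G : X| q₀ (q₀² - 1)`
  (`repNum_dvd_card_stabilizer`), and `v = |X : X_α|` is `q (q² - 1) / (q₀ (q₀² - 1))`.
* `X` has trivial centralizer, so `G` embeds in `Aut X`, whose order is at most `|X| f` for
  `q = 2ᶠ` (`card_aut_SL2`). Hence `|G : X| ≤ f = s t` (`card_le_of_centralizer`).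

The bound on `Aut X = Aut SL(2, 2ᶠ)` comes from the description of its elements as a map induced
by an endomorphism of the field followed by an inner automorphism (`aut_SL2`). Up to
conjugation an automorphism fixes the transvection `u(1)` and the Weyl element `w`. It then acts
on the centralizer `{u(x)}` of `u(1)` by an additive map `a`, which preserves inverses because
`y = x⁻¹` is expressed by a braid relation between `u(x)` and `w u(y) w`; conjugation by the
torus gives `a (x² z) = a(x)² a(z)`, and since every element is a square `a` is multiplicative.
The `u(x)` and `w` generate the group, so `a` determines the automorphism.

The arithmetic (`arith_contra`) runs as follows. As `v` is even, `r` is odd, hence divides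
`|G : X| (q₀² - 1)`. For `t ≥ 3` this makes `r²` at most `(s t)² (q₀² - 1)²`, smaller than
`3 q₀^(3(t-1)) ≤ 3 (v - 1)`. For `t = 2`, `v - 1 = q₀³ + q₀ - 1` and `q₀² - 1` have greatest common
divisor dividing `3`, so `r` divides `9 |G : X|` and `r ≤ 18 s`; only `s = 2, 3` survive the size
bound, and there no divisor of `3 (v - 1)` lies in the allowed range.
-/

open scoped Pointwise
open Matrix

namespace FT

variable {Pt : Type*}

/-! ### Automorphisms of `SL(2, 2ᶠ)` -/

section SL2

variable {F : Type*} [Field F]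

/-- The element of `SL(2, F)` with prescribed entries. -/
def slm (a b c d : F) (h : a * d - b * c = 1) : SpecialLinearGroup (Fin 2) F :=
  ⟨!![a, b; c, d], by rwa [det_fin_two_of]⟩

@[simp] lemma slm00 (a b c d : F) (h : a * d - b * c = 1) : slm a b c d h 0 0 = a := rfl
@[simp] lemma slm01 (a b c d : F) (h : a * d - b * c = 1) : slm a b c d h 0 1 = b := rfl
@[simp] lemma slm10 (a b c d : F) (h : a * d - b * c = 1) : slm a b c d h 1 0 = c := rfl
@[simp] lemma slm11 (a b c d : F) (h : a * d - b * c = 1) : slm a b c d h 1 1 = d := rfl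

/-- The upper transvection `u(x) = [1 x; 0 1]`. -/
def um (x : F) : SpecialLinearGroup (Fin 2) F := slm 1 x 0 1 (by simp)

@[simp] lemma um00 (x : F) : um x 0 0 = 1 := rfl
@[simp] lemma um01 (x : F) : um x 0 1 = x := rfl
@[simp] lemma um10 (x : F) : um x 1 0 = 0 := rfl
@[simp] lemma um11 (x : F) : um x 1 1 = 1 := rfl

lemma sl_det (A : SpecialLinearGroup (Fin 2) F) : A 0 0 * A 1 1 - A 0 1 * A 1 0 = 1 := by
  have := A.2
  rwa [det_fin_two] at this

lemma sl_ext {A B : SpecialLinearGroup (Fin 2) F} (h₁ : A 0 0 = B 0 0) (h₂ : A 0 1 = B 0 1)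
    (h₃ : A 1 0 = B 1 0) (h₄ : A 1 1 = B 1 1) : A = B := by
  ext i j
  fin_cases i <;> fin_cases j <;> assumption

lemma sl_mul_apply (A B : SpecialLinearGroup (Fin 2) F) (i j : Fin 2) :
    (A * B) i j = A i 0 * B 0 j + A i 1 * B 1 j := by
  simp [Matrix.mul_apply, Fin.sum_univ_two]

lemma um_injective : Function.Injective (um : F → SpecialLinearGroup (Fin 2) F) := by
  intro x y h
  simpa using congrArg (fun A : SpecialLinearGroup (Fin 2) F => A 0 1) h

lemma um_zero : um (0 : F) = 1 := by
  apply sl_ext <;> simp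

lemma um_add (x y : F) : um (x + y) = um x * um y := by
  apply sl_ext <;> simp [sl_mul_apply, add_comm]

variable [CharP F 2]

/-- The Weyl element `w = [0 1; 1 0]`; it has determinant `-1 = 1` in characteristic two. -/
def wm : SpecialLinearGroup (Fin 2) F := slm 0 1 1 0 (by simp [CharTwo.neg_eq])

@[simp] lemma wm00 : (wm : SpecialLinearGroup (Fin 2) F) 0 0 = 0 := rfl
@[simp] lemma wm01 : (wm : SpecialLinearGroup (Fin 2) F) 0 1 = 1 := rfl
@[simp] lemma wm10 : (wm : SpecialLinearGroup (Fin 2) F) 1 0 = 1 := rfl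
@[simp] lemma wm11 : (wm : SpecialLinearGroup (Fin 2) F) 1 1 = 0 := rfl

lemma wm_sq : (wm : SpecialLinearGroup (Fin 2) F) * wm = 1 := by
  apply sl_ext <;> simp [sl_mul_apply]

lemma um_sq (x : F) : um x * um x = 1 := by
  rw [← um_add, CharTwo.add_self_eq_zero, um_zero]

/-- Square roots of `1` commuting with `u(1)` are upper transvections. -/
lemma um_of_commute {A : SpecialLinearGroup (Fin 2) F} (h : A * um 1 = um 1 * A)
    (h2 : A * A = 1) : A = um (A 0 1) := by
  have e00 := congrArg (fun A : SpecialLinearGroup (Fin 2) F => A 0 0) h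
  have e01 := congrArg (fun A : SpecialLinearGroup (Fin 2) F => A 0 1) h
  have s00 := congrArg (fun A : SpecialLinearGroup (Fin 2) F => A 0 0) h2
  simp [sl_mul_apply] at e00 e01 s00
  apply sl_ext <;> simp <;> grind

/-- By Cayley–Hamilton, involutions have trace zero, which in characteristic two means equal
diagonal entries. -/
lemma sl_involution {A : SpecialLinearGroup (Fin 2) F} (h2 : A * A = 1) (h1 : A ≠ 1) :
    A 1 1 = A 0 0 := by
  have s00 := congrArg (fun A : SpecialLinearGroup (Fin 2) F => A 0 0) h2
  have s01 := congrArg (fun A : SpecialLinearGroup (Fin 2) F => A 0 1) h2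
  have s10 := congrArg (fun A : SpecialLinearGroup (Fin 2) F => A 1 0) h2
  have s11 := congrArg (fun A : SpecialLinearGroup (Fin 2) F => A 1 1) h2
  simp [sl_mul_apply] at s00 s01 s10 s11
  have := sl_det A
  by_contra hne
  apply h1
  apply sl_ext <;> simp <;> grind

lemma exists_sqrt [Finite F] (x : F) : ∃ y, x = y ^ 2 := by
  have := Fintype.ofFinite F
  obtain ⟨y, hy⟩ := FiniteField.isSquare_of_char_two (ringChar.eq F 2) x
  exact ⟨y, by rw [hy, sq]⟩

/-- All involutions are conjugate to `u(1)`: writing the off-diagonal entries of `A` as `p²` and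
`s²`, any `g` in `SL(2, F)` with first column `(p, s)` satisfies `A = g u(1) g⁻¹`. -/
lemma exists_conj_um [Finite F] {A : SpecialLinearGroup (Fin 2) F} (h2 : A * A = 1) (h1 : A ≠ 1) :
    ∃ g, A * g = g * um 1 := by
  have htr := sl_involution h2 h1
  have hdet := sl_det A
  obtain ⟨p, hp⟩ := exists_sqrt (A 0 1)
  obtain ⟨s, hs⟩ := exists_sqrt (A 1 0)
  have ha : A 0 0 = 1 + p * s := by
    have : (A 0 0 - (1 + p * s)) ^ 2 = 0 := by grind
    have := pow_eq_zero_iff (two_ne_zero) |>.1 this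
    grind
  by_cases hp0 : p = 0
  · have hs0 : s ≠ 0 := by
      rintro rfl
      apply h1
      apply sl_ext <;> simp <;> grind
    refine ⟨slm 0 s⁻¹ s 0 (by simp [hs0, CharTwo.neg_eq]), ?_⟩
    apply sl_ext <;> simp [sl_mul_apply] <;> grind
  · refine ⟨slm p 0 s p⁻¹ (by simp [hp0]), ?_⟩
    apply sl_ext <;> simp [sl_mul_apply] <;> grind

/-- An involution `A ≠ u(1)` in braid relation with `u(1)` has lower left entry `1`, and is
therefore conjugate to `w` by an element commuting with `u(1)`. -/
lemma wm_of_braid {A : SpecialLinearGroup (Fin 2) F} (h2 : A * A = 1) (h1 : A ≠ 1) (hu : A ≠ um 1)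
    (h : A * um 1 * A = um 1 * A * um 1) : A * um (A 0 0) = um (A 0 0) * wm := by
  have htr := sl_involution h2 h1
  have hdet := sl_det A
  have s00 := congrArg (fun A : SpecialLinearGroup (Fin 2) F => A 0 0) h
  have s01 := congrArg (fun A : SpecialLinearGroup (Fin 2) F => A 0 1) h
  have s10 := congrArg (fun A : SpecialLinearGroup (Fin 2) F => A 1 0) h
  have s11 := congrArg (fun A : SpecialLinearGroup (Fin 2) F => A 1 1) h
  simp [sl_mul_apply] at s00 s01 s10 s11
  have hc0 : A 1 0 ≠ 0 := by
    intro hc0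
    apply hu
    apply sl_ext <;> simp <;> grind
  have hc : A 1 0 = 1 := by grind
  apply sl_ext <;> simp [sl_mul_apply] <;> grind

lemma wm_braid : (wm : SpecialLinearGroup (Fin 2) F) * um 1 * wm = um 1 * wm * um 1 := by
  apply sl_ext <;> simp [sl_mul_apply]
  grind

/-- A word in the `u(x)` and `w` which, for `x ≠ 0`, equals the torus element
`diag(x, x⁻¹)`. Being a word, it is easy to follow through an automorphism. -/
def hm (x : F) : SpecialLinearGroup (Fin 2) F := um x * (wm * um x⁻¹ * wm) * um x * wm

lemma hm_conj {x : F} (hx : x ≠ 0) (z : F) : hm x * um z = um (x ^ 2 * z) * hm x := by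
  unfold hm
  apply sl_ext <;> simp [sl_mul_apply] <;> grind

lemma um_braid_inv {x : F} (hx : x ≠ 0) :
    um x * (wm * um x⁻¹ * wm) * um x = (wm * um x⁻¹ * wm) * um x * (wm * um x⁻¹ * wm) := by
  apply sl_ext <;> simp [sl_mul_apply] <;> grind

/-- Together with `um_braid_inv`, this expresses `y = x⁻¹` by a relation between group elements. -/
lemma mul_eq_one_of_braid {x y : F} (hx : x ≠ 0)
    (h : um x * (wm * um y * wm) * um x = (wm * um y * wm) * um x * (wm * um y * wm)) :
    x * y = 1 := by
  have s01 := congrArg (fun A : SpecialLinearGroup (Fin 2) F => A 0 1) h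
  simp [sl_mul_apply] at s01
  grind

/-- The big cell of the Bruhat decomposition. -/
lemma bruhat {A : SpecialLinearGroup (Fin 2) F} (hc : A 1 0 ≠ 0) :
    A = um (A 0 0 / A 1 0) * wm * hm (A 1 0) * um (A 1 1 / A 1 0) := by
  have hdet := sl_det A
  unfold hm
  apply sl_ext <;> simp [sl_mul_apply] <;> grind


/-- An automorphism fixing `u(1)` and `w` is induced by a field endomorphism. -/
lemma exists_map_of_fix [Finite F] (ψ : MulAut (SpecialLinearGroup (Fin 2) F))
    (hu : ψ (um 1) = um 1) (hw : ψ wm = wm) :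
    ∃ σ : F →+* F, ∀ A, ψ A = SpecialLinearGroup.map σ A := by
  have hU : ∀ x, ψ (um x) = um (ψ (um x) 0 1) := by
    intro x
    apply um_of_commute
    · rw [← hu, ← map_mul, ← map_mul, ← um_add, ← um_add, add_comm]
    · rw [← map_mul, um_sq, map_one]
  set a : F → F := fun x => ψ (um x) 0 1 with ha
  replace hU : ∀ x, ψ (um x) = um (a x) := hU
  have a_add : ∀ x y, a (x + y) = a x + a y := by
    intro x y
    apply um_injective
    rw [um_add, ← hU, ← hU, ← hU, um_add, map_mul]
  have a_one : a 1 = 1 := um_injective (by rw [← hU, hu])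
  have a_zero : a 0 = 0 := um_injective (by rw [← hU, um_zero, map_one])
  have a_inj : Function.Injective a := by
    intro x y h
    exact um_injective (ψ.injective (by rw [hU, hU, h]))
  have a_ne : ∀ x, x ≠ 0 → a x ≠ 0 := fun x hx h => hx (a_inj (h.trans a_zero.symm))
  have a_inv : ∀ x, x ≠ 0 → a x⁻¹ = (a x)⁻¹ := by
    intro x hx
    have := congrArg ψ (um_braid_inv hx)
    simp only [map_mul, hU, hw] at this
    exact (inv_eq_of_mul_eq_one_right (mul_eq_one_of_braid (a_ne x hx) this)).symm
  have hH : ∀ x, x ≠ 0 → ψ (hm x) = hm (a x) := by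
    intro x hx
    simp only [hm, map_mul, hU, hw, a_inv x hx]
  have a_sq : ∀ x z, a (x ^ 2 * z) = a x ^ 2 * a z := by
    intro x z
    by_cases hx : x = 0
    · simp [hx, a_zero]
    have := congrArg ψ (hm_conj hx z)
    simp only [map_mul, hU, hH x hx] at this
    rw [hm_conj (a_ne x hx)] at this
    exact (um_injective (mul_right_cancel this)).symm
  have a_mul : ∀ y z, a (y * z) = a y * a z := by
    intro y z
    obtain ⟨x, rfl⟩ := exists_sqrt y
    have := a_sq x 1
    rw [mul_one, a_one, mul_one] at this
    rw [a_sq, this]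
  let σ : F →+* F :=
    { toFun := a, map_one' := a_one, map_mul' := a_mul, map_zero' := a_zero, map_add' := a_add }
  have hσ : ∀ x, σ x = a x := fun _ => rfl
  have mu : ∀ x, SpecialLinearGroup.map σ (um x) = um (a x) := by
    intro x
    apply sl_ext <;> simp [hσ, a_one, a_zero]
  have mw : SpecialLinearGroup.map σ wm = wm := by
    apply sl_ext <;> simp
  have key : ∀ A : SpecialLinearGroup (Fin 2) F, A 1 0 ≠ 0 →
      ψ A = SpecialLinearGroup.map σ A := by
    intro A hA
    rw [bruhat hA]
    simp only [hm, map_mul, hU, hw, mu, mw]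
  refine ⟨σ, fun A => ?_⟩
  by_cases hA : A 1 0 = 0
  · have h1 : (wm * A : SpecialLinearGroup (Fin 2) F) 1 0 ≠ 0 := by
      have := sl_det A
      simp [sl_mul_apply]
      grind
    have := key _ h1
    rw [map_mul, map_mul, hw, mw] at this
    exact mul_left_cancel this
  · exact key A hA

/-- Every automorphism of `SL(2, 2ᶠ)` is induced by a field endomorphism followed by an inner
automorphism. -/
lemma aut_SL2 [Finite F] (φ : MulAut (SpecialLinearGroup (Fin 2) F)) :
    ∃ (g : SpecialLinearGroup (Fin 2) F) (σ : F →+* F),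
      ∀ A, φ A = g * SpecialLinearGroup.map σ A * g⁻¹ := by
  have um_ne : um (1 : F) ≠ 1 := by
    rw [← um_zero]
    exact fun h => one_ne_zero (um_injective h)
  have wm_ne : (wm : SpecialLinearGroup (Fin 2) F) ≠ 1 := fun h => by
    simpa using congrArg (fun A : SpecialLinearGroup (Fin 2) F => A 0 0) h
  have wm_ne_um : (wm : SpecialLinearGroup (Fin 2) F) ≠ um 1 := fun h => by
    simpa using congrArg (fun A : SpecialLinearGroup (Fin 2) F => A 0 0) h
  obtain ⟨g, hg⟩ : ∃ g, φ (um 1) * g = g * um 1 := by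
    apply exists_conj_um
    · rw [← map_mul, um_sq, map_one]
    · simpa using um_ne
  set φ₁ := MulAut.conj g⁻¹ * φ with hφ₁
  have h₁ : φ₁ (um 1) = um 1 := by
    simp only [hφ₁, MulAut.mul_apply, MulAut.conj_apply, inv_inv]
    rw [mul_assoc, hg, inv_mul_cancel_left]
  obtain ⟨x, hx⟩ : ∃ x, φ₁ wm * um x = um x * wm := by
    refine ⟨_, wm_of_braid (A := φ₁ wm) ?_ ?_ ?_ ?_⟩
    · rw [← map_mul, wm_sq, map_one]
    · simpa using wm_ne
    · rw [← h₁]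
      simpa using wm_ne_um
    · have := congrArg φ₁ (wm_braid (F := F))
      simpa only [map_mul, h₁] using this
  set φ₂ := MulAut.conj (um x)⁻¹ * φ₁ with hφ₂
  have h₂ : φ₂ (um 1) = um 1 := by
    simp only [hφ₂, MulAut.mul_apply, MulAut.conj_apply, inv_inv, h₁]
    rw [mul_assoc, ← um_add, add_comm, um_add, inv_mul_cancel_left]
  have h₃ : φ₂ wm = wm := by
    simp only [hφ₂, MulAut.mul_apply, MulAut.conj_apply, inv_inv]
    rw [mul_assoc, hx, inv_mul_cancel_left]
  obtain ⟨σ, hσ⟩ := exists_map_of_fix φ₂ h₂ h₃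
  refine ⟨g * um x, σ, fun A => ?_⟩
  rw [← hσ]
  simp only [hφ₂, hφ₁, MulAut.mul_apply, MulAut.conj_apply]
  group

lemma card_ringHom_le [Finite F] {f : ℕ} (hF : Nat.card F = 2 ^ f) : Nat.card (F →+* F) ≤ f := by
  let _ : Algebra (ZMod 2) F := ZMod.algebra F 2
  have hfin : FiniteDimensional (ZMod 2) F := Module.Finite.of_finite
  have hrank : Module.finrank (ZMod 2) F = f := by
    have := Module.natCard_eq_pow_finrank (K := ZMod 2) (V := F)
    rw [hF, Nat.card_zmod] at this
    exact (Nat.pow_right_injective le_rfl this).symm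
  have h := AlgHom.card_le (F := ZMod 2) (K := F)
  rw [hrank, ← Nat.card_eq_fintype_card] at h
  have hcomm (σ : F →+* F) (c : ZMod 2) : σ (algebraMap (ZMod 2) F c) = algebraMap (ZMod 2) F c :=
    congrArg (fun τ : ZMod 2 →+* F => τ c)
      (Subsingleton.elim (σ.comp (algebraMap (ZMod 2) F)) (algebraMap (ZMod 2) F))
  refine le_trans (Nat.card_le_card_of_injective
    (fun σ : F →+* F => (AlgHom.mk σ (hcomm σ) : F →ₐ[ZMod 2] F)) ?_) h
  intro σ τ hστ
  ext x
  exact congrArg (fun τ : F →ₐ[ZMod 2] F => τ x) hστ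

lemma card_aut_SL2 [Finite F] {f : ℕ} (hF : Nat.card F = 2 ^ f) :
    Nat.card (MulAut (SpecialLinearGroup (Fin 2) F)) ≤
      Nat.card (SpecialLinearGroup (Fin 2) F) * f := by
  choose g σ h using aut_SL2 (F := F)
  have : Finite (F →+* F) := DFunLike.finite _
  calc _ ≤ Nat.card (SpecialLinearGroup (Fin 2) F × (F →+* F)) :=
        Nat.card_le_card_of_injective (fun φ => (g φ, σ φ)) (by
          intro φ₁ φ₂ he
          ext1 A
          simp only [Prod.mk.injEq] at he
          rw [h, h, he.1, he.2])
    _ ≤ _ := by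
      rw [Nat.card_prod]
      exact Nat.mul_le_mul_left _ (card_ringHom_le hF)

lemma center_SL2 : Subgroup.center (SpecialLinearGroup (Fin 2) F) = ⊥ := by
  rw [eq_bot_iff]
  intro A hA
  have h := (Subgroup.mem_center_iff.1 hA (um 1))
  have h' := (Subgroup.mem_center_iff.1 hA wm)
  have e00 := congrArg (fun A : SpecialLinearGroup (Fin 2) F => A 0 0) h
  have e01 := congrArg (fun A : SpecialLinearGroup (Fin 2) F => A 0 1) h
  have e10 := congrArg (fun A : SpecialLinearGroup (Fin 2) F => A 0 0) h'
  have hd := sl_det A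
  simp [sl_mul_apply] at e00 e01 e10
  have : (A 0 0 - 1) ^ 2 = 0 := by grind
  have := pow_eq_zero_iff (two_ne_zero) |>.1 this
  rw [Subgroup.mem_bot]
  apply sl_ext <;> simp <;> grind

/-- In characteristic two the center of `SL(2, F)` is trivial, so `PSL(2, F)` is `SL(2, F)`. -/
noncomputable def psl2Equiv : PSL2 F ≃* SpecialLinearGroup (Fin 2) F :=
  (QuotientGroup.quotientMulEquivOfEq center_SL2).trans QuotientGroup.quotientBot

end SL2

/-! ### Orders of the linear groups -/

section Card

variable (K : Type*) [Field K] [Fintype K]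

lemma card_GL2 : Nat.card (GL (Fin 2) K) =
    (Fintype.card K - 1) * (Fintype.card K * (Fintype.card K ^ 2 - 1)) := by
  rw [Matrix.card_GL_field]
  simp only [Fin.prod_univ_two, Fin.val_zero, Fin.val_one, pow_zero, pow_one]
  rw [sq, ← Nat.mul_sub_one]
  ring

lemma card_units' : Nat.card Kˣ = Fintype.card K - 1 := by
  rw [Nat.card_units, Nat.card_eq_fintype_card]

lemma card_SL2 : Nat.card (SpecialLinearGroup (Fin 2) K) =
    Fintype.card K * (Fintype.card K ^ 2 - 1) := by
  have hsurj : Function.Surjective (GeneralLinearGroup.det : GL (Fin 2) K →* Kˣ) := by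
    intro x
    refine ⟨GeneralLinearGroup.mkOfDetNeZero !![(x : K), 0; 0, 1] (by simp), ?_⟩
    ext
    simp [GeneralLinearGroup.mkOfDetNeZero]
  have h := Subgroup.card_mul_index (GeneralLinearGroup.det : GL (Fin 2) K →* Kˣ).ker
  rw [Subgroup.index_ker, MonoidHom.range_eq_top.2 hsurj, Subgroup.card_top, card_units',
    card_GL2] at h
  have hk : Nat.card (SpecialLinearGroup (Fin 2) K) =
      Nat.card (GeneralLinearGroup.det : GL (Fin 2) K →* Kˣ).ker := by
    apply Nat.card_eq_of_bijective
      (fun A => (⟨SpecialLinearGroup.toGL A, by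
        rw [MonoidHom.mem_ker]; ext; simp⟩ : (GeneralLinearGroup.det : GL (Fin 2) K →* Kˣ).ker))
    constructor
    · intro A B hAB
      exact SpecialLinearGroup.toGL_injective (congrArg Subtype.val hAB)
    · rintro ⟨B, hB⟩
      refine ⟨⟨B, ?_⟩, ?_⟩
      · rw [MonoidHom.mem_ker] at hB
        exact congrArg Units.val hB
      · apply Subtype.ext
        ext
        rfl
  have hpos : 0 < Fintype.card K - 1 := Nat.sub_pos_of_lt Fintype.one_lt_card
  rw [hk]
  rw [mul_comm] at h
  exact Nat.eq_of_mul_eq_mul_left hpos h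

lemma card_PGL2 : Nat.card (PGL2 K) = Fintype.card K * (Fintype.card K ^ 2 - 1) := by
  have h := Subgroup.card_mul_index (Subgroup.center (GL (Fin 2) K))
  have hc : Nat.card (Subgroup.center (GL (Fin 2) K)) = Fintype.card K - 1 := by
    rw [GeneralLinearGroup.center_eq_range_scalar, ← card_units' K]
    refine (Nat.card_congr (MonoidHom.ofInjective ?_).toEquiv).symm
    intro x y hxy
    have := congrArg (fun A : GL (Fin 2) K => (A : Matrix (Fin 2) (Fin 2) K) 0 0) hxy
    ext
    simpa using this
  rw [hc, card_GL2] at h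
  exact Nat.eq_of_mul_eq_mul_left (Nat.sub_pos_of_lt Fintype.one_lt_card) h

end Card

/-! ### The numerical contradiction -/

section Arithmetic

lemma three_mul_sq_le_four_pow {s : ℕ} (hs : 2 ≤ s) : 3 * s ^ 2 ≤ 4 ^ s := by
  induction s, hs using Nat.le_induction with
  | base => norm_num
  | succ s hs ih => rw [pow_succ _ s]; nlinarith

lemma mul_sq_lt_eight_pow {s : ℕ} (hs : 4 ≤ s) : 108 * s ^ 2 < 8 ^ s := by
  induction s, hs using Nat.le_induction with
  | base => norm_num
  | succ s hs ih => rw [pow_succ _ s]; nlinarith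

lemma add_three_sq_le (m : ℕ) : (3 + m) ^ 2 ≤ 9 * 8 ^ m := by
  induction m with
  | zero => norm_num
  | succ m ih => rw [pow_succ _ m]; nlinarith [Nat.zero_le m, Nat.zero_le (m ^ 2)]

/-- For extensions of degree `t = 3 + m`, the bound `r ≤ s t q₀²` is incompatible with
`3 q₀^(3(t-1)) < r²`. -/
lemma large_degree_bound {s : ℕ} (hs : 2 ≤ s) (m : ℕ) :
    (s * (3 + m)) ^ 2 * ((2 ^ s) ^ 2) ^ 2 ≤ 3 * ((2 ^ s) ^ (2 + m)) ^ 3 := by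
  have h1 := three_mul_sq_le_four_pow hs
  have h2 : (3 + m) ^ 2 ≤ 9 * 8 ^ (s * m) :=
    (add_three_sq_le m).trans (Nat.mul_le_mul_left _
      (Nat.pow_le_pow_right (by norm_num) (Nat.le_mul_of_pos_left m (by omega))))
  have e : 3 * ((2 ^ s) ^ (2 + m)) ^ 3 = 3 * (4 ^ s * 8 ^ (s * m)) * ((2 ^ s) ^ 2) ^ 2 := by
    rw [show (4 : ℕ) = 2 ^ 2 by norm_num, show (8 : ℕ) = 2 ^ 3 by norm_num]
    simp only [← pow_mul, ← pow_add, mul_assoc]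
    congr 2
    ring
  rw [e]
  apply Nat.mul_le_mul_right
  calc (s * (3 + m)) ^ 2 = s ^ 2 * (3 + m) ^ 2 := by ring
    _ ≤ s ^ 2 * (9 * 8 ^ (s * m)) := Nat.mul_le_mul_left _ h2
    _ = 3 * ((3 * s ^ 2) * 8 ^ (s * m)) := by ring
    _ ≤ 3 * (4 ^ s * 8 ^ (s * m)) := by gcongr

/-- The arithmetic core: here `q₀ = 2 ^ s`, `q = q₀ ^ t` and `n` plays the role of `|G : X|`. -/
lemma arith_contra {s t n r v : ℕ} (hs : 2 ≤ s) (ht : 2 ≤ t)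
    (hv : v * (2 ^ s * ((2 ^ s) ^ 2 - 1)) = (2 ^ s) ^ t * (((2 ^ s) ^ t) ^ 2 - 1))
    (h1 : r ∣ 3 * (v - 1)) (h2 : r ∣ n * (2 ^ s * ((2 ^ s) ^ 2 - 1)))
    (hn0 : 0 < n) (hn : n ≤ s * t) (hr : 3 * (v - 1) < r * r) : False := by
  obtain ⟨m, rfl⟩ : ∃ m, t = m + 2 := ⟨t - 2, by omega⟩
  have h4 : 4 ≤ 2 ^ s := Nat.pow_le_pow_right (n := 2) (by norm_num) hs
  obtain ⟨Q, hQ⟩ : ∃ Q, (2 ^ s) ^ 2 = Q + 1 := ⟨(2 ^ s) ^ 2 - 1, by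
    have : 0 < (2 ^ s) ^ 2 := by positivity
    omega⟩
  have hQ15 : 15 ≤ Q := by nlinarith
  -- `Q = q₀² - 1` and `y = q₀ᵗ⁻¹`, so that `v Q = y (y² (Q + 1) - 1)`.
  set y := (2 ^ s) ^ (m + 1) with hy
  have hy4 : 2 ^ s ≤ y := Nat.le_self_pow (by omega) _
  have hyy : 1 ≤ y ^ 2 := Nat.one_le_pow _ _ (by omega)
  have hvy : v * Q = y ^ 3 * Q + y * (y ^ 2 - 1) := by
    have e1 : (2 ^ s) ^ (m + 2) = 2 ^ s * y := by rw [hy]; ring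
    rw [e1, mul_pow, hQ, Nat.add_sub_cancel] at hv
    have h3 : v * Q = y * ((Q + 1) * y ^ 2 - 1) := by
      apply Nat.eq_of_mul_eq_mul_left (show 0 < 2 ^ s by positivity)
      rw [← mul_assoc _ y, ← hv]; ring
    rw [h3]
    obtain ⟨z, hz⟩ : ∃ z, y ^ 2 = z + 1 := ⟨y ^ 2 - 1, by omega⟩
    rw [hz, pow_succ, hz, Nat.add_sub_cancel,
      show (Q + 1) * (z + 1) - 1 = Q * (z + 1) + z by rw [add_mul]; omega]
    ring
  have hv1 : 1 ≤ v := by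
    rcases Nat.eq_zero_or_pos v with h | h
    · rw [h] at hvy
      have : 0 < y ^ 3 * Q := by positivity
      omega
    · exact h
  have hyeven : 2 ∣ y := by
    rw [hy, ← pow_mul]
    exact dvd_pow_self 2 (by positivity)
  have hQodd : ¬ 2 ∣ Q := by
    have : 2 ∣ (2 ^ s) ^ 2 := by
      rw [← pow_mul]
      exact dvd_pow_self 2 (by positivity)
    omega
  have hveven : 2 ∣ v := by
    have h : 2 ∣ v * Q := by
      rw [hvy]
      exact dvd_add (Dvd.dvd.mul_right (dvd_pow hyeven (by norm_num)) _) (hyeven.mul_right _)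
    exact (Nat.prime_two.dvd_mul.1 h).resolve_right hQodd
  have hrodd : Nat.Coprime r (2 ^ s) := by
    apply Nat.Coprime.pow_right
    rw [Nat.coprime_comm, Nat.prime_two.coprime_iff_not_dvd]
    intro h
    have := h.trans h1
    omega
  have h2' : r ∣ n * Q := by
    apply hrodd.dvd_of_dvd_mul_left
    rw [hQ, Nat.add_sub_cancel] at h2
    rwa [mul_left_comm] at h2
  -- With `t = m + 2`, the case `m = 0` is the quadratic extension.
  rcases Nat.eq_zero_or_pos m with rfl | hm
  · have hy1 : y = 2 ^ s := by rw [hy]; ring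
    have hvq : v = y ^ 3 + y := by
      apply Nat.eq_of_mul_eq_mul_right (show 0 < Q by omega)
      rw [hvy, hy1, hQ, Nat.add_sub_cancel]; ring
    rw [← hy1] at hQ
    have h9 : r ∣ 9 * n := by
      zify at h1 h2' hvq hQ ⊢
      rw [Nat.cast_sub hv1] at h1
      push_cast at h1
      -- the Bézout identity behind `gcd (y³ + y - 1) (y² - 1) ∣ 3`
      have e : (9 * n : ℤ) = (n * (2 * y + 1)) * (3 * (v - 1))
          - (3 * (2 * y ^ 2 + y + 4)) * (n * Q) := by
        rw [hvq, show (Q : ℤ) = y ^ 2 - 1 by linarith]; ring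
      rw [e]
      exact dvd_sub (h1.mul_left _) (h2'.mul_left _)
    have hr18 : r ≤ 18 * s := by
      have := Nat.le_of_dvd (by omega) h9
      nlinarith
    by_cases hs4 : 4 ≤ s
    · have := mul_sq_lt_eight_pow hs4
      have e : y ^ 3 = 8 ^ s := by
        rw [hy1, ← pow_mul, mul_comm, pow_mul]; norm_num
      have h5 : r * r ≤ (18 * s) * (18 * s) := Nat.mul_le_mul hr18 hr18
      have : v - 1 ≥ 8 ^ s := by omega
      nlinarith
    · interval_cases s
      · norm_num at hy1
        rw [hy1] at hvq
        norm_num at hvq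
        subst hvq
        norm_num at *
        interval_cases r <;> omega
      · norm_num at hy1
        rw [hy1] at hvq
        norm_num at hvq
        subst hvq
        norm_num at *
        interval_cases r <;> omega
  · obtain ⟨m, rfl⟩ : ∃ k, m = k + 1 := ⟨m - 1, by omega⟩
    have hyQ : Q + 1 ≤ y := by
      rw [← hQ, hy]
      exact Nat.pow_le_pow_right (by omega) (by omega)
    have hvlarge : y ^ 3 + 1 ≤ v := by
      have h5 : 1 ≤ y ^ 2 - 1 := by
        have : 2 ≤ y ^ 2 := by nlinarith
        omega
      by_contra hlt
      have : v * Q ≤ y ^ 3 * Q := Nat.mul_le_mul_right _ (by omega)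
      have : 0 < y * (y ^ 2 - 1) := by positivity
      omega
    have hrle : r ≤ s * (3 + m) * (Q + 1) := by
      have h6 : r ≤ n * Q := Nat.le_of_dvd (by positivity) h2'
      calc r ≤ n * Q := h6
        _ ≤ s * (3 + m) * (Q + 1) := by
          apply Nat.mul_le_mul _ (by omega)
          rw [add_comm 3 m]
          exact hn
    have hb := large_degree_bound hs m
    rw [hQ, show 2 + m = m + 1 + 1 by ring, ← hy] at hb
    have : r * r ≤ (s * (3 + m)) ^ 2 * (Q + 1) ^ 2 :=
      (Nat.mul_le_mul hrle hrle).trans (le_of_eq (by ring))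
    omega

end Arithmetic

/-! ### Fisher's inequality -/

section Incidence

open Finset

variable {P β : Type*} [Fintype P] [Fintype β] [DecidableEq P]

/-- Fisher's inequality: the Gram matrix `(r - lam) I + lam J` of the rows of the incidence matrix
is positive definite, so there are at least as many columns as rows. -/
lemma fisher (I : P → β → ℝ) (r lam : ℝ) (hlam : 0 ≤ lam) (hr : lam < r)
    (hdiag : ∀ x, ∑ B, I x B * I x B = r)
    (hoff : ∀ x y, x ≠ y → ∑ B, I x B * I y B = lam) :
    Fintype.card P ≤ Fintype.card β := by
  have hG : ∀ x y, ∑ B, I x B * I y B = lam + if x = y then r - lam else 0 := by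
    intro x y
    by_cases h : x = y
    · subst h; simp [hdiag]
    · simp [h, hoff x y h]
  let T : (P → ℝ) →ₗ[ℝ] (β → ℝ) :=
    { toFun := fun c B => ∑ x, c x * I x B
      map_add' := by intro c d; ext B; simp [add_mul, sum_add_distrib]
      map_smul' := by intro a c; ext B; simp [mul_sum, mul_assoc] }
  have hT : ∀ c B, T c B = ∑ x, c x * I x B := fun _ _ => rfl
  have hquad : ∀ c, ∑ B, T c B ^ 2 = lam * (∑ x, c x) ^ 2 + (r - lam) * ∑ x, c x ^ 2 := by
    intro c
    calc ∑ B, T c B ^ 2 = ∑ B, ∑ x, ∑ y, c x * c y * (I x B * I y B) := by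
          refine sum_congr rfl fun B _ => ?_
          rw [hT, sq, sum_mul_sum]
          refine sum_congr rfl fun x _ => sum_congr rfl fun y _ => by ring
      _ = ∑ x, ∑ y, c x * c y * ∑ B, I x B * I y B := by
          rw [sum_comm]
          refine sum_congr rfl fun x _ => ?_
          rw [sum_comm]
          refine sum_congr rfl fun y _ => by rw [mul_sum]
      _ = _ := by
          simp only [hG, mul_add, sum_add_distrib, mul_ite, mul_zero, sum_ite_eq, mem_univ, if_true]
          congr 1
          · rw [sq, sum_mul_sum, mul_sum]
            refine sum_congr rfl fun x _ => ?_
            rw [mul_sum]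
            exact sum_congr rfl fun y _ => by ring
          · rw [mul_sum]
            exact sum_congr rfl fun x _ => by ring
  have hinj : Function.Injective T := by
    rw [injective_iff_map_eq_zero]
    intro c hc
    have h := hquad c
    rw [hc] at h
    simp only [Pi.zero_apply, ne_eq, OfNat.ofNat_ne_zero, not_false_eq_true, zero_pow,
      sum_const_zero] at h
    have h0 : ∑ x, c x ^ 2 = 0 := by
      have h1 : 0 ≤ ∑ x, c x ^ 2 := sum_nonneg fun _ _ => sq_nonneg _
      have h2 : 0 ≤ lam * (∑ x, c x) ^ 2 := by positivity
      nlinarith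
    ext x
    have := (sum_eq_zero_iff_of_nonneg (fun _ _ => sq_nonneg _)).1 h0 x (mem_univ x)
    simpa using this
  simpa using LinearMap.finrank_le_finrank_of_injective hinj

end Incidence
/-! ### Flag-transitive designs -/

section Designs

/-- The standard count of flags through a point, and Fisher's inequality in the form `k ≤ r`. -/
lemma design_counts [Fintype Pt] {𝓑 : Set (Set Pt)} {k r : ℕ} (hD : IsDesign 𝓑 k 3)
    (hk : 2 < k) (hkv : k < Nat.card Pt - 1) (hr : ∀ x : Pt, repNum 𝓑 x = r) :
    r * (k - 1) = 3 * (Nat.card Pt - 1) ∧ k ≤ r := by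
  classical
  have : Fintype 𝓑 := Fintype.ofFinite _
  -- the incidence matrix
  let I : Pt → 𝓑 → ℕ := fun x B => if x ∈ (B : Set Pt) then 1 else 0
  have hmul : ∀ x y B, I x B * I y B = if x ∈ (B : Set Pt) ∧ y ∈ (B : Set Pt) then 1 else 0 := by
    intro x y B
    simp only [I]
    split_ifs <;> simp_all
  have hcol : ∀ B, ∑ x, I x B = k := by
    intro B
    rw [← hD.block_card B B.2]
    simp only [I, Finset.sum_boole, Nat.cast_id, Nat.card_eq_fintype_card]
    exact (Fintype.card_subtype _).symm
  have hcount : ∀ p : Set Pt → Prop,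
      ∑ B : 𝓑, (if p (B : Set Pt) then 1 else 0) = Nat.card {B : Set Pt | B ∈ 𝓑 ∧ p B} := by
    intro p
    rw [Finset.sum_boole, Nat.cast_id, ← Fintype.card_subtype, ← Nat.card_eq_fintype_card]
    exact Nat.card_congr (Equiv.subtypeSubtypeEquivSubtypeInter (· ∈ 𝓑) p)
  have hrow : ∀ x, ∑ B, I x B = r := by
    intro x
    rw [← hr x]
    exact hcount (fun B => x ∈ B)
  have hoff : ∀ x y, x ≠ y → ∑ B, I x B * I y B = 3 := by
    intro x y hxy
    rw [← hD.pair_count x y hxy]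
    simp only [hmul]
    rw [← hcount (fun B => x ∈ B ∧ y ∈ B)]
    refine Finset.sum_congr rfl fun B _ => ?_
    congr
  have hdiag : ∀ x, ∑ B, I x B * I x B = r := by
    intro x
    rw [← hrow x]
    refine Finset.sum_congr rfl fun B _ => ?_
    simp [hmul, I]
  have hne : Nonempty Pt := by
    by_contra h
    rw [not_nonempty_iff] at h
    simp at hkv
  obtain ⟨x⟩ := hne
  have hrk : r * k = r + 3 * (Nat.card Pt - 1) := by
    calc r * k = ∑ B, I x B * ∑ y, I y B := by simp only [hcol, ← Finset.sum_mul, hrow]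
      _ = ∑ y, ∑ B, I x B * I y B := by
        rw [Finset.sum_comm]
        exact Finset.sum_congr rfl fun B _ => Finset.mul_sum _ _ _
      _ = ∑ B, I x B * I x B + ∑ y ∈ Finset.univ.erase x, ∑ B, I x B * I y B :=
        (Finset.add_sum_erase _ _ (Finset.mem_univ x)).symm
      _ = r + 3 * (Nat.card Pt - 1) := by
        rw [hdiag, Finset.sum_congr rfl (fun y hy => hoff x y (Finset.ne_of_mem_erase hy).symm)]
        simp [Finset.card_erase_of_mem, mul_comm]
  have h1 : r * (k - 1) = 3 * (Nat.card Pt - 1) := by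
    rw [Nat.mul_sub_one]
    omega
  refine ⟨h1, ?_⟩
  have h3r : 3 < r := by
    by_contra h
    have : r * (k - 1) ≤ 3 * (k - 1) := Nat.mul_le_mul_right _ (by omega)
    omega
  have hfisher : Fintype.card Pt ≤ Fintype.card 𝓑 := by
    refine fisher (fun x B => (I x B : ℝ)) r 3 (by norm_num) (by exact_mod_cast h3r) ?_ ?_
    · intro x
      exact_mod_cast hdiag x
    · intro x y hxy
      exact_mod_cast hoff x y hxy
  have hbk : Fintype.card 𝓑 * k = Fintype.card Pt * r := by
    have := Finset.sum_comm (s := Finset.univ) (t := Finset.univ) (f := I)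
    simp only [hcol, hrow, Finset.sum_const, Finset.card_univ, smul_eq_mul] at this
    exact this.symm
  have hpos : 0 < Fintype.card Pt := Fintype.card_pos_iff.2 ⟨x⟩
  refine Nat.le_of_mul_le_mul_left ?_ hpos
  rw [← hbk]
  exact Nat.mul_le_mul_right _ hfisher

/-- The stabilizer of `α` is transitive on the blocks through `α`. -/
lemma repNum_dvd_card_stabilizer {G : Type*} [Group G] [MulAction G Pt] {𝓑 : Set (Set Pt)}
    (hacts : ActsOn G 𝓑) (hflag : FlagTransitive G 𝓑) (α : Pt) (hpos : repNum 𝓑 α ≠ 0) :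
    repNum 𝓑 α ∣ Nat.card (MulAction.stabilizer G α) := by
  obtain ⟨⟨B, hB, hαB⟩⟩ : Nonempty {B : Set Pt | B ∈ 𝓑 ∧ α ∈ B} := (Nat.card_ne_zero.1 hpos).1
  have horb : MulAction.orbit (MulAction.stabilizer G α) B = {B : Set Pt | B ∈ 𝓑 ∧ α ∈ B} := by
    ext C
    constructor
    · rintro ⟨⟨g, hg⟩, rfl⟩
      refine ⟨hacts g B hB, ?_⟩
      rw [MulAction.mem_stabilizer_iff] at hg
      exact ⟨α, hαB, hg⟩
    · rintro ⟨hC, hαC⟩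
      obtain ⟨g, hg, hgα⟩ := hflag B hB C hC α hαB α hαC
      exact ⟨⟨g, hgα⟩, hg⟩
  rw [repNum, ← horb, Nat.card_coe_set_eq, ← MulAction.index_stabilizer]
  exact Subgroup.index_dvd_card _

/-- Conjugation embeds `G` in `Aut X` when `X` has trivial centralizer. -/
lemma card_le_of_centralizer {G F : Type*} [Group G] [Finite G] [Field F] [CharP F 2] [Finite F]
    {f : ℕ} (hF : Nat.card F = 2 ^ f) (X : Subgroup G) [X.Normal] (e : X ≃* PSL2 F)
    (hc : Subgroup.centralizer (X : Set G) = ⊥) : Nat.card G ≤ Nat.card X * f := by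
  let e' := e.trans psl2Equiv
  have hinj : Function.Injective (MulAut.conjNormal : G →* MulAut X) := by
    rw [injective_iff_map_eq_one]
    intro g hg
    rw [← Subgroup.mem_bot, ← hc, Subgroup.mem_centralizer_iff]
    intro x hx
    have := congrArg (fun φ : MulAut X => ((φ ⟨x, hx⟩ : X) : G)) hg
    simp only [MulAut.conjNormal_apply, MulAut.one_apply] at this
    rw [mul_inv_eq_iff_eq_mul] at this
    exact this.symm
  have : Finite (MulAut X) := DFunLike.finite _
  calc Nat.card G ≤ Nat.card (MulAut X) := Nat.card_le_card_of_injective _ hinj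
    _ = Nat.card (MulAut (SpecialLinearGroup (Fin 2) F)) :=
      Nat.card_congr (MulAut.congr e').toEquiv
    _ ≤ Nat.card (SpecialLinearGroup (Fin 2) F) * f := card_aut_SL2 hF
    _ = Nat.card X * f := by rw [Nat.card_congr e'.toEquiv]

end Designs

end FT

open FT

/-- In the setting of a non-trivial, non-symmetric flag-transitive,
point-primitive `2-(v,k,3)` design with `3 ∣ r`, almost simple automorphism group `G` with
socle `X ≅ PSL(2,q)` acting point-primitively with maximal point stabilizer `X_α`:
the stabilizer `X_α` is not isomorphic to a subfield subgroup `PGL(2,q₀)` with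
`q = 2^f = q₀ᵗ`, `t` prime and `q₀ ≠ 2`. -/
theorem stmt_11
    (q : ℕ) (hq4 : 4 ≤ q)
    (F : Type) [Field F] [Fintype F] (hF : Fintype.card F = q)
    {Pt : Type*} [Fintype Pt] {G : Type*} [Group G] [MulAction G Pt] [FaithfulSMul G Pt]
    -- `D = (Pt, 𝓑)` is a non-trivial, non-symmetric `2-(v,k,3)` design …
    (𝓑 : Set (Set Pt)) (v k : ℕ) (hv : Nat.card Pt = v)
    (hD : IsDesign 𝓑 k 3) (hnt : 2 < k ∧ k < v - 1)
    (hnonsym : Nat.card 𝓑 ≠ v)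
    -- … whose replication number `r` is divisible by 3, …
    (r : ℕ) (hr : ∀ x : Pt, repNum 𝓑 x = r) (h3r : 3 ∣ r)
    -- … admitting the flag-transitive, point-primitive automorphism group `G`, …
    (hacts : ActsOn G 𝓑) (hflag : FlagTransitive G 𝓑)
    (hprim : PointPrimitive G Pt)
    -- … where `G` is almost simple with socle `X ≅ PSL(2,q)` (so `PSL(2,q) ⊴ G ≤ PΓL(2,q)`):
    (X : Subgroup G) (hXnormal : X.Normal)
    (hXiso : Nonempty (X ≃* PSL2 F))
    (hXcent : Subgroup.centralizer (X : Set G) = ⊥)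
    -- `X` acts point-primitively on `D`, with maximal point stabilizer `X_α`:
    (hXprim : PointPrimitive X Pt)
    (α : Pt) (hmax : IsCoatom (MulAction.stabilizer X α))
    :
    ∀ (q₀ t f : ℕ) (F₀ : Type) [Field F₀] [Fintype F₀], Fintype.card F₀ = q₀ →
      q = 2 ^ f → q = q₀ ^ t → t.Prime → q₀ ≠ 2 →
      IsEmpty ((MulAction.stabilizer X α) ≃* PGL2 F₀) := by
  intro q₀ t f F₀ _ _ hF₀ hqf hqt ht hq₀
  constructor
  intro eα
  have hq₀one : 1 < q₀ := hF₀ ▸ Fintype.one_lt_card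
  obtain ⟨s, -, rfl⟩ : ∃ s ≤ f, q₀ = 2 ^ s :=
    (Nat.dvd_prime_pow Nat.prime_two).1 (hqf ▸ hqt ▸ dvd_pow_self q₀ ht.ne_zero)
  have hs : 2 ≤ s := by
    by_contra h
    interval_cases s <;> simp_all
  have hf : f = s * t := by
    rw [hqf, ← pow_mul] at hqt
    exact Nat.pow_right_injective le_rfl hqt
  have : Fact (Nat.Prime 2) := ⟨Nat.prime_two⟩
  have : CharP F 2 := charP_of_card_eq_prime_pow (hF.trans hqf)
  obtain ⟨e⟩ := hXiso
  have : Finite G := Finite.of_injective (MulAction.toPerm : G → Equiv.Perm Pt)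
    MulAction.toPerm_injective
  have := hprim.1
  have := hXprim.1
  obtain ⟨hrk, hkr⟩ := design_counts hD hnt.1 (hv ▸ hnt.2) hr
  rw [hv] at hrk
  have hXcard : Nat.card X = q * (q ^ 2 - 1) := by
    rw [Nat.card_congr (e.trans psl2Equiv).toEquiv, card_SL2, hF]
  have hXαcard : Nat.card (MulAction.stabilizer X α) = 2 ^ s * ((2 ^ s) ^ 2 - 1) := by
    rw [Nat.card_congr eα.toEquiv, card_PGL2, hF₀]
  have hXv : v * Nat.card (MulAction.stabilizer X α) = Nat.card X := by
    rw [← hv, ← MulAction.index_stabilizer_of_transitive X α, Subgroup.index_mul_card]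
  have hGv : v * Nat.card (MulAction.stabilizer G α) = Nat.card G := by
    rw [← hv, ← MulAction.index_stabilizer_of_transitive G α, Subgroup.index_mul_card]
  have hGX : X.index * Nat.card X = Nat.card G := Subgroup.index_mul_card X
  have hGα : Nat.card (MulAction.stabilizer G α) =
      X.index * Nat.card (MulAction.stabilizer X α) := by
    apply Nat.eq_of_mul_eq_mul_left (show 0 < v by omega)
    rw [hGv, ← hGX, ← hXv]
    ring
  have hindex : X.index ≤ s * t := by
    have h := card_le_of_centralizer (f := f) (by rw [Nat.card_eq_fintype_card, hF, hqf]) X e hXcent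
    rw [← hGX, mul_comm, hf] at h
    exact Nat.le_of_mul_le_mul_left h Nat.card_pos
  have hrdvd : r ∣ X.index * (2 ^ s * ((2 ^ s) ^ 2 - 1)) := by
    rw [← hXαcard, ← hGα, ← hr α]
    exact repNum_dvd_card_stabilizer hacts hflag α (by rw [hr]; omega)
  refine arith_contra hs ht.two_le (v := v) ?_ (hrk ▸ dvd_mul_right r _) hrdvd
    (Nat.pos_of_ne_zero Subgroup.index_ne_zero_of_finite) hindex ?_
  · rw [← hXαcard, hXv, hXcard, hqt]
  · rw [← hrk]
    exact Nat.mul_lt_mul_of_pos_left (by omega) (by omega)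
end
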